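/- arXiv:2401.01878 — 2 statements merged into one kernel-verified Lean document; each statement's English description precedes it below -/
import Mathlib

section
/- Let G be a group and let V be a ℚ-vector space equipped with a ℚ-linear action of G such that the G-orbit of every element of V is finite. Then the composite of the inclusion of the invariants V^G into V with the projection of V onto the coinvariants V_G is a bijection (a ℚ-linear isomorphism V^G ≅ V_G). -/
/-!
A finitely generated subspace of `V` involves only finitely many orbits, all of them finite, so it
is fixed pointwise by a normal subgroup `K` of finite index. On `V^K` the action factors through
the finite group `G ⧸ K`, where averaging is a projection onto the invariants whose kernel is
spanned by the `g • v - v`. Hence `V` is the direct sum of its invariants and that span.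
-/

open Representation

section MulAction

variable {G X : Type*} [Group G] [MulAction G X]

theorem finiteIndex_stabilizer_of_finite_orbit {x : X} (hx : (MulAction.orbit G x).Finite) :
    (MulAction.stabilizer G x).FiniteIndex where
  index_ne_zero := by
    rw [MulAction.index_stabilizer]
    exact Set.ncard_ne_zero_of_mem (MulAction.mem_orbit_self x) hx

theorem exists_normal_finiteIndex_forall_le_stabilizer (s : Finset X)
    (hs : ∀ x ∈ s, (MulAction.orbit G x).Finite) :
    ∃ K : Subgroup G, K.Normal ∧ K.FiniteIndex ∧ ∀ x ∈ s, K ≤ MulAction.stabilizer G x := by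
  let H : Subgroup G := ⨅ x ∈ s, MulAction.stabilizer G x
  have : H.FiniteIndex :=
    Subgroup.finiteIndex_iInf' _ fun x hx ↦ finiteIndex_stabilizer_of_finite_orbit (hs x hx)
  exact ⟨H.normalCore, inferInstance, inferInstance,
    fun x hx ↦ H.normalCore_le.trans (iInf₂_le x hx)⟩

end MulAction

theorem coinvariantsKer_eq_span {k G V : Type*} [CommRing k] [Monoid G] [AddCommGroup V]
    [Module k V] (ρ : Representation k G V) :
    Coinvariants.ker ρ = Submodule.span k {x : V | ∃ (g : G) (v : V), ρ g v - v = x} := by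
  simp only [Coinvariants.ker, Set.range, Prod.exists]

section FiniteGroup

variable {k G V : Type*} [CommRing k] [Group G] [Fintype G] [Invertible (Fintype.card G : k)]
  [AddCommGroup V] [Module k V] (ρ : Representation k G V)

theorem averageMap_self_apply (g : G) (v : V) : ρ.averageMap (ρ g v) = ρ.averageMap v := by
  rw [averageMap, ← asAlgebraHom_single_one, ← Module.End.mul_apply, ← map_mul,
    GroupAlgebra.mul_average_right]

theorem coinvariants_mk_averageMap (v : V) :
    Coinvariants.mk ρ (ρ.averageMap v) = Coinvariants.mk ρ v := by
  simp [GroupAlgebra.average, Finset.card_univ, ← Nat.cast_smul_eq_nsmul k, smul_smul]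

theorem ker_averageMap : LinearMap.ker ρ.averageMap = Coinvariants.ker ρ := by
  apply le_antisymm
  · intro v hv
    rw [← Coinvariants.mk_eq_zero, ← coinvariants_mk_averageMap, LinearMap.mem_ker.mp hv, map_zero]
  · refine Submodule.span_le.mpr ?_
    rintro _ ⟨⟨g, v⟩, rfl⟩
    exact LinearMap.sub_mem_ker_iff.mpr (averageMap_self_apply ρ g v)

theorem isCompl_invariants_coinvariantsKer_of_fintype :
    IsCompl ρ.invariants (Coinvariants.ker ρ) :=
  ker_averageMap ρ ▸ ρ.isProj_averageMap.isCompl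

end FiniteGroup

section NormalSubgroup

variable {k G V : Type*} [CommRing k] [Group G] [AddCommGroup V] [Module k V]
  (ρ : Representation k G V) (K : Subgroup G) [K.Normal]

theorem mem_invariants_quotientToInvariants_iff {x : invariants (ρ.comp K.subtype)} :
    x ∈ (ρ.quotientToInvariants K).invariants ↔ (x : V) ∈ ρ.invariants := by
  rw [mem_invariants, mem_invariants, QuotientGroup.mk_surjective.forall]
  exact forall_congr' fun g ↦ Subtype.ext_iff

theorem coe_mem_coinvariantsKer_of_mem_quotientToInvariants {x : invariants (ρ.comp K.subtype)}
    (hx : x ∈ Coinvariants.ker (ρ.quotientToInvariants K)) : (x : V) ∈ Coinvariants.ker ρ := by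
  suffices Coinvariants.ker (ρ.quotientToInvariants K) ≤
    (Coinvariants.ker ρ).comap (Submodule.subtype _) from this hx
  refine Submodule.span_le.mpr ?_
  rintro _ ⟨⟨⟨g⟩, v⟩, rfl⟩
  exact Coinvariants.sub_mem_ker g (v : V)

theorem isCompl_invariants_coinvariantsKer_quotientToInvariants [Algebra ℚ k] [K.FiniteIndex] :
    IsCompl (ρ.quotientToInvariants K).invariants
      (Coinvariants.ker (ρ.quotientToInvariants K)) := by
  have : Fintype (G ⧸ K) := Fintype.ofFinite _
  have card_isUnit : IsUnit (Fintype.card (G ⧸ K) : k) := by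
    have : IsUnit (Fintype.card (G ⧸ K) : ℚ) :=
      isUnit_iff_ne_zero.mpr (Nat.cast_ne_zero.mpr Fintype.card_ne_zero)
    simpa only [map_natCast] using this.map (algebraMap ℚ k)
  have := card_isUnit.invertible
  exact isCompl_invariants_coinvariantsKer_of_fintype _

end NormalSubgroup

section FiniteOrbits

variable {k G V : Type*} [CommRing k] [Group G] [AddCommGroup V] [Module k V]
  {ρ : Representation k G V}

theorem exists_normal_finiteIndex_forall_mem_invariants
    (hfin : ∀ v : V, (Set.range fun g : G ↦ ρ g v).Finite) (s : Finset V) :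
    ∃ K : Subgroup G, K.Normal ∧ K.FiniteIndex ∧ ∀ v ∈ s, v ∈ invariants (ρ.comp K.subtype) := by
  let _ : MulAction G V := MulAction.compHom V ρ
  obtain ⟨K, hKn, hKf, hK⟩ :=
    exists_normal_finiteIndex_forall_le_stabilizer (G := G) s fun v _ ↦ hfin v
  exact ⟨K, hKn, hKf, fun v hv g ↦ hK v hv g.2⟩

theorem exists_mem_coinvariantsKer_quotientToInvariants
    (hfin : ∀ v : V, (Set.range fun g : G ↦ ρ g v).Finite)
    {x : V} (hx : x ∈ Coinvariants.ker ρ) :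
    ∃ (K : Subgroup G) (_ : K.Normal) (_ : K.FiniteIndex),
      ∃ y ∈ Coinvariants.ker (ρ.quotientToInvariants K), (y : V) = x := by
  classical
  obtain ⟨c, rfl⟩ := Finsupp.mem_span_range_iff_exists_finsupp.mp hx
  obtain ⟨K, hKn, hKf, hK⟩ :=
    exists_normal_finiteIndex_forall_mem_invariants hfin (c.support.image Prod.snd)
  refine ⟨K, hKn, hKf, ?_⟩
  suffices c.sum (fun gv a ↦ a • (ρ gv.1 gv.2 - gv.2)) ∈
    (Coinvariants.ker (ρ.quotientToInvariants K)).map (Submodule.subtype _) from this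
  refine Submodule.sum_mem _ fun gv hgv ↦ Submodule.smul_mem _ _ ?_
  let v : invariants (ρ.comp K.subtype) := ⟨gv.2, hK _ (Finset.mem_image_of_mem _ hgv)⟩
  exact ⟨_, Coinvariants.sub_mem_ker (gv.1 : G ⧸ K) v, rfl⟩

variable [Algebra ℚ k]

theorem disjoint_invariants_coinvariantsKer
    (hfin : ∀ v : V, (Set.range fun g : G ↦ ρ g v).Finite) :
    Disjoint ρ.invariants (Coinvariants.ker ρ) := by
  rw [Submodule.disjoint_def]
  intro x hx_inv hx_ker
  obtain ⟨K, _, _, y, hy_ker, rfl⟩ := exists_mem_coinvariantsKer_quotientToInvariants hfin hx_ker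
  have hy_inv := (mem_invariants_quotientToInvariants_iff ρ K).mpr hx_inv
  have disjoint := (isCompl_invariants_coinvariantsKer_quotientToInvariants ρ K).disjoint
  rw [Submodule.disjoint_def.mp disjoint y hy_inv hy_ker, Submodule.coe_zero]

theorem codisjoint_invariants_coinvariantsKer
    (hfin : ∀ v : V, (Set.range fun g : G ↦ ρ g v).Finite) :
    Codisjoint ρ.invariants (Coinvariants.ker ρ) := by
  rw [Submodule.codisjoint_iff_exists_add_eq]
  intro v
  obtain ⟨K, _, _, hK⟩ := exists_normal_finiteIndex_forall_mem_invariants hfin {v}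
  have codisjoint := (isCompl_invariants_coinvariantsKer_quotientToInvariants ρ K).codisjoint
  obtain ⟨y, z, hy, hz, hyz⟩ := Submodule.codisjoint_iff_exists_add_eq.mp codisjoint
    ⟨v, hK v (Finset.mem_singleton_self v)⟩
  exact ⟨y, z, (mem_invariants_quotientToInvariants_iff ρ K).mp hy,
    coe_mem_coinvariantsKer_of_mem_quotientToInvariants ρ K hz, congrArg Subtype.val hyz⟩

theorem isCompl_invariants_coinvariantsKer
    (hfin : ∀ v : V, (Set.range fun g : G ↦ ρ g v).Finite) :
    IsCompl ρ.invariants (Coinvariants.ker ρ) :=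
  ⟨disjoint_invariants_coinvariantsKer hfin, codisjoint_invariants_coinvariantsKer hfin⟩

theorem invariants_to_coinvariants_bijective_general
    (hfin : ∀ v : V, (Set.range fun g : G ↦ ρ g v).Finite) :
    Function.Bijective (Coinvariants.mk ρ ∘ₗ ρ.invariants.subtype) := by
  have isCompl := (isCompl_invariants_coinvariantsKer hfin).symm
  exact Submodule.toLinearMap_symm_quotientEquivOfIsCompl isCompl ▸
    (Submodule.quotientEquivOfIsCompl _ _ isCompl).symm.bijective

end FiniteOrbits

/-- Let `G` be a group acting `ℚ`-linearly on a `ℚ`-vector space `V` such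
that every `G`-orbit is finite.  Then the composite of the inclusion of the invariants
`V^G ↪ V` with the projection `V ↠ V_G` onto the coinvariants (the quotient of `V` by the
subspace spanned by the elements `g•v − v`) is a `ℚ`-linear bijection `V^G ≅ V_G`. -/
theorem invariants_to_coinvariants_bijective
    {G V : Type*} [Group G] [AddCommGroup V] [Module ℚ V]
    (ρ : Representation ℚ G V)
    (hfin : ∀ v : V, (Set.range fun g : G => ρ g v).Finite) :
    Function.Bijective
      ((Submodule.span ℚ {x : V | ∃ (g : G) (v : V), ρ g v - v = x}).mkQ.comp
        ρ.invariants.subtype) := by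
  rw [← coinvariantsKer_eq_span]
  exact invariants_to_coinvariants_bijective_general hfin
end

section
/- Let p be a prime and N ≥ 1 an integer, and let G = SL_N(ℤ_p) be the special linear group of N×N matrices of determinant 1 over the p-adic integers, regarded as a topological group with the topology induced from the matrix entries. Then the set of conjugacy classes of closed subgroups of G (i.e., the quotient of the set of closed subgroups of G by the equivalence relation identifying H and K whenever K = gHg⁻¹ for some g ∈ G) is countable if and only if N ≤ 2. -/
/-- `SL_N(ℤ_p)` with the topology induced from the matrix entries. -/
instance SLTopology (p : ℕ) [Fact p.Prime] (N : ℕ) :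
    TopologicalSpace (Matrix.SpecialLinearGroup (Fin N) ℤ_[p]) :=
  inferInstanceAs (TopologicalSpace {A : Matrix (Fin N) (Fin N) ℤ_[p] // A.det = 1})

/-!
For `N ≥ 3` two diagonal entries can be prescribed freely: for each `y ∈ ℤ_p` the powers of
`diag(1 + p, 1 + p y, *, 1, …)` with exponents in `ℤ_p` form a closed subgroup. Conjugate diagonal
matrices have the same eigenvalues, so each conjugacy class arises from only countably many of the
uncountably many `y`.

Let `N = 2`. Finite subgroups congruent to high `p`-adic precision are conjugate, by averaging an
approximate intertwiner. To an infinite closed subgroup `H` attach its Lie algebra, spanned by the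
`p`-adic logarithms of its elements; a closed subgroup of `M` with the same Lie algebra is open in
`M`, and `M` has only countably many open subgroups. If the Lie algebra is not all of `sl₂`, then
`H` preserves a line in `sl₂`: its generator `Z` can be taken in the Lie algebra if that is abelian,
and is otherwise a commutator, which is orthogonal to the Lie algebra for the trace form. If
`det Z ≠ 0`, then `H` lies in the normalizer of a torus; if `det Z = 0`, then `H` is conjugate to a
subgroup of the Borel subgroup, where it is open in the Borel subgroup, in one of its subgroups with
torsion diagonal, or in the normalizer of a torus. Finally, tori whose Lie algebras are `p`-adically
close are conjugate, so there are countably many torus normalizers up to conjugacy.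
-/

namespace PadicSL

open Matrix
open scoped Pointwise

local notation "SL" => Matrix.SpecialLinearGroup

/-! ### Families of subgroups up to conjugacy -/

section Conjugacy

variable {G : Type*} [Group G]

/-- The subgroups in `S` fall into countably many conjugacy classes; stated through a countable set
of subgroups meeting every class, so that no quotient is needed. -/
def CountableUpToConj (S : Set (Subgroup G)) : Prop :=
  ∃ T : Set (Subgroup G), T.Countable ∧ ∀ H ∈ S, ∃ g : G, MulAut.conj g • H ∈ T

variable {S T : Set (Subgroup G)}

lemma countableUpToConj_of_countable (hS : S.Countable) : CountableUpToConj S :=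
  ⟨S, hS, fun H hH => ⟨1, by simpa using hH⟩⟩

lemma CountableUpToConj.of_forall_exists_conj_mem (hT : CountableUpToConj T)
    (h : ∀ H ∈ S, ∃ g : G, MulAut.conj g • H ∈ T) : CountableUpToConj S := by
  obtain ⟨U, hU, hTU⟩ := hT
  refine ⟨U, hU, fun H hH => ?_⟩
  obtain ⟨g, hg⟩ := h H hH
  obtain ⟨g', hg'⟩ := hTU _ hg
  exact ⟨g' * g, by rwa [map_mul, mul_smul]⟩

lemma CountableUpToConj.mono (hT : CountableUpToConj T) (h : S ⊆ T) : CountableUpToConj S :=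
  hT.of_forall_exists_conj_mem fun H hH => ⟨1, by simpa using h hH⟩

lemma CountableUpToConj.union (hS : CountableUpToConj S) (hT : CountableUpToConj T) :
    CountableUpToConj (S ∪ T) := by
  obtain ⟨U, hU, hSU⟩ := hS
  obtain ⟨V, hV, hTV⟩ := hT
  refine ⟨U ∪ V, hU.union hV, ?_⟩
  rintro H (hH | hH)
  · exact (hSU H hH).imp fun _ => Or.inl
  · exact (hTV H hH).imp fun _ => Or.inr

lemma equivalence_exists_conj_smul_eq :
    Equivalence fun H K : Subgroup G => ∃ g : G, MulAut.conj g • H = K where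
  refl H := ⟨1, by simp⟩
  symm := by
    rintro H _ ⟨g, rfl⟩
    exact ⟨g⁻¹, by rw [map_inv, inv_smul_smul]⟩
  trans := by
    rintro H _ _ ⟨g, rfl⟩ ⟨g', rfl⟩
    exact ⟨g' * g, by rw [map_mul, mul_smul]⟩

lemma countableUpToConj_range_of_code {ι β : Type*} [Countable β] {F : ι → Subgroup G}
    (code : ι → β) (h : ∀ i j, code i = code j → ∃ g : G, MulAut.conj g • F i = F j) :
    CountableUpToConj (Set.range F) := by
  choose rep hrep using fun b : Set.range code => b.2
  refine ⟨Set.range (F ∘ rep), Set.countable_range _, ?_⟩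
  rintro _ ⟨i, rfl⟩
  obtain ⟨g, hg⟩ := h i (rep ⟨code i, i, rfl⟩) (hrep ⟨code i, i, rfl⟩).symm
  exact ⟨g, ⟨code i, i, rfl⟩, hg.symm⟩

lemma countable_of_countableUpToConj_range {ι : Type*} {F : ι → Subgroup G}
    (hS : CountableUpToConj (Set.range F))
    (hF : ∀ i, {j | ∃ g : G, MulAut.conj g • F i = F j}.Countable) : Countable ι := by
  obtain ⟨T, hT, hFT⟩ := hS
  choose g hg using fun i => hFT (F i) ⟨i, rfl⟩
  have := hT.to_subtype
  refine Set.Countable.of_preimage_singleton (f := fun i => (⟨_, hg i⟩ : T)) fun t => ?_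
  obtain hempty | ⟨i, hi⟩ := Set.eq_empty_or_nonempty ((fun i => (⟨_, hg i⟩ : T)) ⁻¹' {t})
  · simp [hempty]
  · refine (hF i).mono fun j hj => equivalence_exists_conj_smul_eq.trans ⟨g i, rfl⟩ ?_
    have hij : MulAut.conj (g j) • F j = MulAut.conj (g i) • F i :=
      congrArg Subtype.val (Eq.trans hj hi.symm)
    exact equivalence_exists_conj_smul_eq.symm ⟨g j, hij⟩

lemma countable_quot_conj_iff (P : Subgroup G → Prop) :
    Countable (Quot fun H K : {H : Subgroup G // P H} =>
      ∃ g : G, H.1.map (MulAut.conj g).toMonoidHom = K.1) ↔ CountableUpToConj {H | P H} := by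
  change Countable (Quot fun H K : {H // P H} => ∃ g : G, MulAut.conj g • H.1 = K.1) ↔ _
  constructor
  · intro hcount
    rw [← Subtype.range_val_subtype]
    exact countableUpToConj_range_of_code (Quot.mk fun H K : {H // P H} => ∃ g : G,
      MulAut.conj g • H.1 = K.1) fun H K =>
        ((equivalence_exists_conj_smul_eq.comap Subtype.val).quot_mk_eq_iff H K).1
  · rintro ⟨T, hT, hST⟩
    have := hT.to_subtype
    choose g hg using fun H : {H // P H} => hST H.1 H.2
    refine Function.Injective.countable (f := fun q => (⟨_, hg (Quot.out q)⟩ : T))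
      fun q q' hqq' => ?_
    rw [← Quot.out_eq q, ← Quot.out_eq q']
    exact Quot.sound (equivalence_exists_conj_smul_eq.trans ⟨_, congrArg Subtype.val hqq'⟩
      (equivalence_exists_conj_smul_eq.symm ⟨_, rfl⟩))

end Conjugacy

section OpenIn

variable {G : Type*} [Group G]

/-- `H` is an open subgroup of `M` for the topology in which the subgroups `Γ k` form a basis of
neighbourhoods of `1`. -/
def OpenIn (Γ : ℕ → Subgroup G) (M H : Subgroup G) : Prop :=
  H ≤ M ∧ ∃ k, M ⊓ Γ k ≤ H

variable {Γ : ℕ → Subgroup G} [hΓ : ∀ k, (Γ k).Normal]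

lemma OpenIn.conj {M H : Subgroup G} (h : OpenIn Γ M H) (g : G) :
    OpenIn Γ (MulAut.conj g • M) (MulAut.conj g • H) := by
  obtain ⟨hHM, k, hk⟩ := h
  refine ⟨Subgroup.pointwise_smul_le_pointwise_smul_iff.2 hHM, k, ?_⟩
  rw [← (hΓ k).conj_smul_eq_self g, ← Subgroup.smul_inf]
  exact Subgroup.pointwise_smul_le_pointwise_smul_iff.2 hk

lemma countable_setOf_openIn [∀ k, (Γ k).FiniteIndex] (M : Subgroup G) :
    {H | OpenIn Γ M H}.Countable := by
  refine (Set.countable_iUnion fun k => Set.countable_range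
    fun Q : Subgroup (G ⧸ Γ k) => M ⊓ Q.comap (QuotientGroup.mk' (Γ k))).mono ?_
  rintro H ⟨hHM, k, hk⟩
  refine Set.mem_iUnion.2 ⟨k, H.map (QuotientGroup.mk' (Γ k)), ?_⟩
  simp only [Subgroup.comap_map_eq, QuotientGroup.ker_mk']
  refine le_antisymm (fun x hx => ?_) (le_inf hHM le_sup_left)
  obtain ⟨hxM, hx⟩ := hx
  obtain ⟨h, hh, c, hc, rfl⟩ := Subgroup.mem_sup_of_normal_right.1 hx
  exact mul_mem hh (hk ⟨(Subgroup.mul_mem_cancel_left M (hHM hh)).1 hxM, hc⟩)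

lemma CountableUpToConj.openIn [∀ k, (Γ k).FiniteIndex] {S : Set (Subgroup G)}
    (hS : CountableUpToConj S) : CountableUpToConj {H | ∃ M ∈ S, OpenIn Γ M H} := by
  obtain ⟨T, hT, hST⟩ := hS
  refine ⟨⋃ M ∈ T, {H | OpenIn Γ M H}, hT.biUnion fun M _ => countable_setOf_openIn M, ?_⟩
  rintro H ⟨M, hM, hH⟩
  obtain ⟨g, hg⟩ := hST M hM
  exact ⟨g, Set.mem_biUnion hg (hH.conj g)⟩

end OpenIn

/-! ### A continuum of diagonal subgroups when `n ≥ 3` -/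

section DiagonalSubgroups

variable {n A R : Type*} [Fintype n] [DecidableEq n] [AddCommGroup A] [CommRing R]

/-- The homomorphism into the diagonal matrices whose diagonal entries are the characters `c i`. -/
def diagonalHom (c : n → AddChar A R) (hc : ∏ i, c i = 1) :
    Multiplicative A →* SL n R where
  toFun a := ⟨diagonal fun i => c i a.toAdd, by
    rw [det_diagonal, ← AddChar.prod_apply, hc, AddChar.one_apply]⟩
  map_one' := by ext : 1; simp
  map_mul' a b := Subtype.ext <| by
    simp only [toAdd_mul, AddChar.map_add_eq_mul, ← diagonal_mul_diagonal]
    rfl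

@[simp] lemma coe_diagonalHom (c : n → AddChar A R) (hc : ∏ i, c i = 1) (a : Multiplicative A) :
    (diagonalHom c hc a : Matrix n n R) = diagonal fun i => c i a.toAdd := rfl

lemma exists_forall_exists_apply_eq_of_conj_range_diagonalHom [IsDomain R]
    {c c' : n → AddChar A R} {hc : ∏ i, c i = 1} {hc' : ∏ i, c' i = 1}
    (h : ∃ g : SL n R,
      MulAut.conj g • (diagonalHom c hc).range = (diagonalHom c' hc').range) (a : A) :
    ∃ b : A, ∀ i, ∃ j, c' i a = c j b := by
  obtain ⟨g, hg⟩ := h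
  have hmem : diagonalHom c' hc' (.ofAdd a) ∈ MulAut.conj g • (diagonalHom c hc).range :=
    hg ▸ ⟨_, rfl⟩
  obtain ⟨_, ⟨b, rfl⟩, hb⟩ := hmem
  refine ⟨b.toAdd, fun i => ?_⟩
  have hconj : g * diagonalHom c hc b = diagonalHom c' hc' (.ofAdd a) * g :=
    mul_inv_eq_iff_eq_mul.1 hb
  obtain ⟨j, hj⟩ : ∃ j, g i j ≠ 0 := by
    by_contra! hrow
    exact g.det_ne_zero (det_eq_zero_of_row_eq_zero i hrow)
  have hentry := congrArg (fun x : SL n R => x i j) hconj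
  simp only [Matrix.SpecialLinearGroup.coe_mul, coe_diagonalHom, mul_diagonal, diagonal_mul,
    toAdd_ofAdd] at hentry
  exact ⟨j, mul_left_cancel₀ hj (by rw [hentry, mul_comm])⟩

end DiagonalSubgroups

section PadicCharacters

variable {p : ℕ} [Fact p.Prime]

lemma exists_dvd_p_pow {x : ℤ_[p]} (hx : x ≠ 0) : ∃ k : ℕ, x ∣ p ^ k :=
  ⟨x.valuation, by
    conv_lhs => rw [PadicInt.unitCoeff_spec hx]
    exact (Units.mul_left_dvd).2 dvd_rfl⟩

lemma p_ne_zero : (p : ℤ_[p]) ≠ 0 := PadicInt.prime_p.ne_zero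

lemma subsingleton_preimage_of_continuous_addChar (κ : AddChar ℤ_[p] ℤ_[p]) (hκ : Continuous κ)
    {x : ℤ_[p]} (hx : ∀ k ≠ 0, x ^ k ≠ 1) : (κ ⁻¹' {x}).Subsingleton := by
  intro s (hs : κ s = x) t (ht : κ t = x)
  by_contra hne
  have hker : κ (s - t) = 1 := by
    refine (AddChar.val_isUnit κ t).mul_left_injective ?_
    change κ (s - t) * κ t = 1 * κ t
    rw [← AddChar.map_add_eq_mul, sub_add_cancel, one_mul, hs, ht]
  have hker_mul : ∀ u, κ (u * (s - t)) = 1 := congrFun <|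
    Continuous.ext_on PadicInt.denseRange_natCast (by fun_prop) continuous_const <| by
      rintro _ ⟨k, rfl⟩
      beta_reduce
      rw [← nsmul_eq_mul, AddChar.map_nsmul_eq_pow, hker, one_pow]
  obtain ⟨k, u, hu⟩ := exists_dvd_p_pow (sub_ne_zero.2 hne)
  refine hx (p ^ k) (pow_ne_zero _ (NeZero.ne p)) ?_
  rw [← hs, ← AddChar.map_nsmul_eq_pow, nsmul_eq_mul, Nat.cast_pow, hu, ← hker_mul (u * s)]
  ring_nf

lemma tendsto_p_mul_pow (y : ℤ_[p]) :
    Filter.Tendsto (((p : ℤ_[p]) * y) ^ ·) Filter.atTop (nhds 0) :=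
  tendsto_pow_atTop_nhds_zero_of_norm_lt_one
    ((PadicInt.norm_lt_one_iff_dvd _).2 (dvd_mul_right _ _))

/-- The continuous character `s ↦ (1 + p y) ^ s` of `ℤ_p`. -/
noncomputable def powChar (y : ℤ_[p]) : AddChar ℤ_[p] ℤ_[p] :=
  PadicInt.addChar_of_value_at_one _ (tendsto_p_mul_pow y)

lemma powChar_one (y : ℤ_[p]) : powChar y 1 = 1 + p * y :=
  PadicInt.addChar_of_value_at_one_def (tendsto_p_mul_pow y)

lemma continuous_powChar (y : ℤ_[p]) : Continuous (powChar y) :=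
  PadicInt.continuous_addChar_of_value_at_one (tendsto_p_mul_pow y)

lemma one_add_p_pow_ne_one {k : ℕ} (hk : k ≠ 0) : (1 + (p : ℤ_[p])) ^ k ≠ 1 := by
  have hlt : 1 < (1 + p) ^ k := Nat.one_lt_pow hk (by have := NeZero.pos p; omega)
  exact_mod_cast hlt.ne'

lemma uncountable_padicInt : Uncountable ℤ_[p] := by
  have hball : Cardinal.continuum ≤ Cardinal.mk (Metric.closedBall (0 : ℚ_[p]) 1) :=
    continuum_le_cardinal_of_isOpen ℚ_[p] (IsUltrametricDist.isOpen_closedBall _ one_ne_zero)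
      ⟨0, by simp⟩
  have hmk : Cardinal.aleph0 < Cardinal.mk ℤ_[p] := by
    refine Cardinal.aleph0_lt_continuum.trans_le (hball.trans_eq (Cardinal.mk_congr ?_))
    exact Equiv.subtypeEquivRight fun x => by simp
  exact Cardinal.aleph0_lt_mk_iff.1 hmk

end PadicCharacters

section LowerBound

variable {p : ℕ} [Fact p.Prime] {n : Type*} [DecidableEq n]

/-- The characters of the diagonal one-parameter subgroup with entries `(1 + p) ^ s` at `i`,
`(1 + p y) ^ s` at `j`, the inverse of their product at `k`, and `1` elsewhere. -/
noncomputable def threeChars (i j k : n) (y : ℤ_[p]) : n → AddChar ℤ_[p] ℤ_[p] :=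
  Pi.mulSingle i (powChar 1) * Pi.mulSingle j (powChar y) *
    Pi.mulSingle k (powChar 1 * powChar y)⁻¹

lemma continuous_threeChars (i j k : n) (y : ℤ_[p]) (l : n) :
    Continuous (threeChars i j k y l) := by
  have hsingle : ∀ (m : n) (κ : AddChar ℤ_[p] ℤ_[p]), Continuous κ →
      Continuous (Pi.mulSingle (M := fun _ => AddChar ℤ_[p] ℤ_[p]) m κ l) := fun m κ hκ => by
    obtain rfl | hlm := eq_or_ne l m
    · simpa using hκ
    · simpa [hlm] using continuous_one
  have hprod : Continuous ⇑((powChar 1 * powChar y)⁻¹ : AddChar ℤ_[p] ℤ_[p]) :=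
    ((continuous_powChar 1).mul (continuous_powChar y)).comp continuous_neg
  exact ((hsingle i _ (continuous_powChar 1)).mul (hsingle j _ (continuous_powChar y))).mul
    (hsingle k _ hprod)

variable [Fintype n]

lemma prod_threeChars (i j k : n) (y : ℤ_[p]) : ∏ l, threeChars i j k y l = 1 := by
  simp only [threeChars, Pi.mul_apply, Finset.prod_mul_distrib, Fintype.prod_pi_mulSingle',
    mul_inv_cancel]

/-- The diagonal one-parameter subgroup with characters `threeChars i j k y`. -/
noncomputable def threeCharsSubgroup (i j k : n) (y : ℤ_[p]) :
    Subgroup (SL n ℤ_[p]) :=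
  (diagonalHom (threeChars i j k y) (prod_threeChars i j k y)).range

lemma isClosed_threeCharsSubgroup (i j k : n) (y : ℤ_[p]) :
    IsClosed (threeCharsSubgroup i j k y : Set (SL n ℤ_[p])) := by
  have hcont : Continuous (diagonalHom (threeChars i j k y) (prod_threeChars i j k y)) :=
    .subtype_mk (.matrix_diagonal (continuous_pi fun l =>
      (continuous_threeChars i j k y l).comp continuous_toAdd)) _
  have : CompactSpace (Multiplicative ℤ_[p]) := inferInstanceAs (CompactSpace ℤ_[p])
  exact (isCompact_range hcont).isClosed

lemma countable_setOf_conj_threeCharsSubgroup {i j k : n} (hij : i ≠ j) (hik : i ≠ k) (hjk : j ≠ k)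
    (y : ℤ_[p]) :
    {z | ∃ g : SL n ℤ_[p],
      MulAut.conj g • threeCharsSubgroup i j k y = threeCharsSubgroup i j k z}.Countable := by
  have hfib (l : n) : (threeChars i j k y l ⁻¹' {1 + (p : ℤ_[p])}).Countable :=
    (subsingleton_preimage_of_continuous_addChar _ (continuous_threeChars i j k y l)
      fun _ => one_add_p_pow_ne_one).countable
  have hvalues : (⋃ l, ⋃ m, threeChars i j k y m ''
      (threeChars i j k y l ⁻¹' {1 + (p : ℤ_[p])})).Countable :=
    Set.countable_iUnion fun l => Set.countable_iUnion fun m => (hfib l).image _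
  have hinj : Function.Injective fun z : ℤ_[p] => 1 + (p : ℤ_[p]) * z :=
    fun z z' h => mul_left_cancel₀ p_ne_zero (add_left_cancel h)
  refine (hvalues.preimage hinj).mono fun z hz => ?_
  obtain ⟨s, hs⟩ := exists_forall_exists_apply_eq_of_conj_range_diagonalHom hz 1
  obtain ⟨l, hl⟩ := hs i
  obtain ⟨m, hm⟩ := hs j
  simp only [threeChars, Pi.mul_apply, Pi.mulSingle_eq_same, Pi.mulSingle_eq_of_ne hij,
    Pi.mulSingle_eq_of_ne hik, mul_one, powChar_one] at hl
  simp only [threeChars, Pi.mul_apply, Pi.mulSingle_eq_same, Pi.mulSingle_eq_of_ne hij.symm,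
    Pi.mulSingle_eq_of_ne hjk, mul_one, one_mul, powChar_one] at hm
  exact Set.mem_iUnion₂.2 ⟨l, m, s, hl.symm, hm.symm⟩

theorem not_countableUpToConj_isClosed (hn : 2 < Fintype.card n) :
    ¬ CountableUpToConj {H : Subgroup (SL n ℤ_[p]) | IsClosed (H : Set (SL n ℤ_[p]))} := by
  intro hcount
  obtain ⟨i, j, k, hij, hik, hjk⟩ := Fintype.two_lt_card_iff.1 hn
  have hrange : CountableUpToConj (Set.range (threeCharsSubgroup (p := p) i j k)) :=
    hcount.mono (Set.range_subset_iff.2 (isClosed_threeCharsSubgroup i j k))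
  have := countable_of_countableUpToConj_range hrange
    (countable_setOf_conj_threeCharsSubgroup hij hik hjk)
  exact uncountable_padicInt.not_countable this

end LowerBound

/-! ### Congruence subgroups -/

section Congruence

variable {p : ℕ} [Fact p.Prime]

lemma eq_zero_of_forall_p_pow_dvd {x : ℤ_[p]} (h : ∀ k : ℕ, (p : ℤ_[p]) ^ k ∣ x) : x = 0 := by
  by_contra hx
  obtain ⟨k, hk⟩ := exists_dvd_p_pow hx
  exact Nat.not_succ_le_self k <| (pow_dvd_pow_iff p_ne_zero PadicInt.prime_p.not_isUnit).1
    ((h (k + 1)).trans hk)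

lemma exists_eq_natCast_add_p_pow_mul (x : ℤ_[p]) (k : ℕ) :
    ∃ m : ℕ, ∃ y : ℤ_[p], x = m + p ^ k * y := by
  obtain ⟨y, hy⟩ := Ideal.mem_span_singleton.1 (PadicInt.appr_spec k x)
  exact ⟨x.appr k, y, by linear_combination hy⟩

lemma toZModPow_eq_iff {k : ℕ} {x y : ℤ_[p]} :
    PadicInt.toZModPow k x = PadicInt.toZModPow k y ↔ ∃ z, x = y + p ^ k * z := by
  rw [← sub_eq_zero, ← map_sub, ← RingHom.mem_ker, PadicInt.ker_toZModPow,
    Ideal.mem_span_singleton]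
  exact exists_congr fun z => sub_eq_iff_eq_add'

variable {n : Type*}

lemma map_toZModPow_eq_iff {k : ℕ} {A B : Matrix n n ℤ_[p]} :
    A.map (PadicInt.toZModPow k) = B.map (PadicInt.toZModPow k) ↔
      ∃ C : Matrix n n ℤ_[p], A = B + (p : ℤ_[p]) ^ k • C := by
  simp only [← Matrix.ext_iff, map_apply, toZModPow_eq_iff, Matrix.add_apply,
    Matrix.smul_apply, smul_eq_mul, Classical.skolem]
  exact Iff.rfl

variable [Fintype n] [DecidableEq n]

/-- Reduction of the entries modulo `p ^ k`. -/
noncomputable def reduction (k : ℕ) : SL n ℤ_[p] →* SL n (ZMod (p ^ k)) :=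
  Matrix.SpecialLinearGroup.map (PadicInt.toZModPow k)

lemma reduction_eq_iff {k : ℕ} {g h : SL n ℤ_[p]} :
    reduction k g = reduction k h ↔
      ∃ C : Matrix n n ℤ_[p], (g : Matrix n n ℤ_[p]) = h + (p : ℤ_[p]) ^ k • C := by
  rw [← map_toZModPow_eq_iff]
  exact Subtype.ext_iff

/-- The principal congruence subgroup of level `p ^ k`. -/
noncomputable def congruenceSubgroup (p : ℕ) [Fact p.Prime] (n : Type*) [Fintype n] [DecidableEq n]
    (k : ℕ) : Subgroup (SL n ℤ_[p]) :=
  (reduction k).ker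

local notation "Γ" => congruenceSubgroup p n

instance (k : ℕ) : (Γ k).Normal := MonoidHom.normal_ker _

instance (k : ℕ) : (Γ k).FiniteIndex := by
  have : NeZero (p ^ k) := ⟨pow_ne_zero k (NeZero.ne p)⟩
  exact Subgroup.finiteIndex_ker _

lemma mem_congruenceSubgroup_iff {k : ℕ} {g : SL n ℤ_[p]} :
    g ∈ Γ k ↔ ∃ A : Matrix n n ℤ_[p], (g : Matrix n n ℤ_[p]) = 1 + (p : ℤ_[p]) ^ k • A := by
  rw [congruenceSubgroup, MonoidHom.mem_ker, ← map_one (reduction k), reduction_eq_iff,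
    Matrix.SpecialLinearGroup.coe_one]

lemma inv_mul_mem_congruenceSubgroup_iff {k : ℕ} {g h : SL n ℤ_[p]} :
    h⁻¹ * g ∈ Γ k ↔ reduction k h = reduction k g := by
  rw [congruenceSubgroup, MonoidHom.mem_ker, map_mul, map_inv, inv_mul_eq_one]

lemma tendsto_of_forall_reduction_eq {u : ℕ → SL n ℤ_[p]} {g : SL n ℤ_[p]}
    (h : ∀ k, reduction k (u k) = reduction k g) : Filter.Tendsto u Filter.atTop (nhds g) := by
  have hp : (p : ℝ)⁻¹ < 1 := inv_lt_one_of_one_lt₀ (mod_cast (Fact.out : p.Prime).one_lt)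
  refine tendsto_subtype_rng.2 (tendsto_pi_nhds.2 fun i => tendsto_pi_nhds.2 fun j => ?_)
  rw [tendsto_iff_norm_sub_tendsto_zero]
  refine squeeze_zero (fun _ => norm_nonneg _) (fun k => ?_)
    (tendsto_pow_atTop_nhds_zero_of_lt_one (r := (p : ℝ)⁻¹) (by positivity) hp)
  obtain ⟨C, hC⟩ := reduction_eq_iff.1 (h k)
  calc ‖(u k : Matrix n n ℤ_[p]) i j - (g : Matrix n n ℤ_[p]) i j‖
      = (p : ℝ)⁻¹ ^ k * ‖C i j‖ := by simp [hC]
    _ ≤ (p : ℝ)⁻¹ ^ k := mul_le_of_le_one_right (by positivity) (PadicInt.norm_le_one _)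

lemma mem_of_isClosed_of_forall_reduction_eq {H : Subgroup (SL n ℤ_[p])}
    (hH : IsClosed (H : Set (SL n ℤ_[p]))) {g : SL n ℤ_[p]}
    (h : ∀ k, ∃ h ∈ H, reduction k h = reduction k g) : g ∈ H := by
  choose u hu hr using h
  exact hH.mem_of_tendsto (tendsto_of_forall_reduction_eq hr) (.of_forall hu)

lemma reduction_eq_of_le {k l : ℕ} (hkl : k ≤ l) {g h : SL n ℤ_[p]}
    (hgh : reduction l g = reduction l h) : reduction k g = reduction k h := by
  obtain ⟨C, hC⟩ := reduction_eq_iff.1 hgh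
  exact reduction_eq_iff.2 ⟨(p : ℤ_[p]) ^ (l - k) • C, by
    rw [hC, smul_smul, ← pow_add, Nat.add_sub_cancel' hkl]⟩

-- Successive approximation: an element of `M ⊓ Γ K` is an infinite product of elements of `H`.
lemma inf_congruenceSubgroup_le_of_forall_exists_reduction_eq {H M : Subgroup (SL n ℤ_[p])}
    (hH : IsClosed (H : Set (SL n ℤ_[p]))) (hHM : H ≤ M) {K : ℕ}
    (h : ∀ k ≥ K, ∀ g ∈ M ⊓ Γ k, ∃ h ∈ H, reduction (k + 1) h = reduction (k + 1) g) :
    M ⊓ Γ K ≤ H := by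
  rintro g ⟨hgM, hgK⟩
  have happrox (j : ℕ) : ∃ h ∈ H, reduction (K + j) h = reduction (K + j) g := by
    induction j with
    | zero => exact ⟨1, one_mem _, by rw [map_one]; exact (MonoidHom.mem_ker.1 hgK).symm⟩
    | succ j ih =>
      obtain ⟨h₁, hh₁, hred₁⟩ := ih
      obtain ⟨h₂, hh₂, hred₂⟩ := h (K + j) (Nat.le_add_right K j) (h₁⁻¹ * g)
        ⟨M.mul_mem (M.inv_mem (hHM hh₁)) hgM, inv_mul_mem_congruenceSubgroup_iff.2 hred₁⟩
      exact ⟨h₁ * h₂, mul_mem hh₁ hh₂, by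
        rw [← add_assoc, map_mul, hred₂, ← map_mul, mul_inv_cancel_left]⟩
  refine mem_of_isClosed_of_forall_reduction_eq hH fun k => ?_
  obtain ⟨h, hh, hred⟩ := happrox k
  exact ⟨h, hh, reduction_eq_of_le (Nat.le_add_left k K) hred⟩

end Congruence

/-! ### Powers, roots and logarithms of matrices near the identity -/

section Matrices

lemma exists_eq_smul_of_ne_zero {R m n : Type*} [CommRing R] [IsDomain R] [ValuationRing R]
    [Finite m] [Finite n] {A : Matrix m n R} (hA : A ≠ 0) :
    ∃ c : R, c ≠ 0 ∧ ∃ Y : Matrix m n R, A = c • Y ∧ ∃ i j, Y i j = 1 := by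
  obtain ⟨i₀, j₀, -⟩ : ∃ i j, A i j ≠ 0 := by
    by_contra! h
    exact hA (Matrix.ext h)
  have : Nonempty (m × n) := ⟨(i₀, j₀)⟩
  have : IsTrans R (fun x y => y ∣ x) := ⟨fun _ _ _ hxy hyz => hyz.trans hxy⟩
  have hdir : Directed (fun x y : R => y ∣ x) fun q : m × n => A q.1 q.2 := fun q r =>
    (ValuationRing.dvd_total (A q.1 q.2) (A r.1 r.2)).elim (fun h => ⟨q, dvd_rfl, h⟩)
      fun h => ⟨r, h, dvd_rfl⟩
  obtain ⟨⟨i, j⟩, hij⟩ := hdir.finite_le id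
  choose Y hY using fun k l => hij (k, l)
  have hAY : A = A i j • Matrix.of Y := Matrix.ext hY
  have hc : A i j ≠ 0 := fun h => hA (by rw [hAY, h, zero_smul])
  exact ⟨A i j, hc, Matrix.of Y, hAY, i, j,
    mul_left_cancel₀ hc ((hY i j).symm.trans (mul_one _).symm)⟩

lemma exists_one_add_pow_eq {R A : Type*} [CommRing R] [Ring A] [Algebra R A] (c : R) (Y : A)
    (m : ℕ) : ∃ S : A, (1 + c • Y) ^ m = 1 + c • ((m : R) • Y + c • S) := by
  induction m with
  | zero => exact ⟨0, by simp⟩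
  | succ m ih =>
    obtain ⟨S, hS⟩ := ih
    refine ⟨((m : R) • Y + c • S) * Y + S, ?_⟩
    rw [pow_succ, hS]
    simp only [mul_add, add_mul, mul_one, one_mul, smul_mul_assoc, mul_smul_comm, Nat.cast_succ,
      add_smul, one_smul, smul_add, smul_smul]
    abel

variable {p : ℕ} [Fact p.Prime] {n : Type*}

lemma exists_limit_of_forall_eq_add_p_pow_mul {f : ℕ → ℤ_[p]}
    (h : ∀ j, ∃ c, f (j + 1) = f j + p ^ j * c) : ∃ x, ∀ j, ∃ c, x = f j + p ^ j * c := by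
  have smodEq_iff (j : ℕ) (x y : ℤ_[p]) :
      x ≡ y [SMOD ((IsLocalRing.maximalIdeal ℤ_[p]) ^ j • ⊤ : Submodule ℤ_[p] ℤ_[p])] ↔
        ∃ c, y = x + p ^ j * c := by
    rw [PadicInt.maximalIdeal_eq_span_p, Ideal.span_singleton_pow, SModEq.comm, SModEq.sub_mem,
      smul_eq_mul, Ideal.mul_top, Ideal.mem_span_singleton]
    exact exists_congr fun c => sub_eq_iff_eq_add'
  let s := AdicCompletion.AdicCauchySequence.mk (IsLocalRing.maximalIdeal ℤ_[p]) ℤ_[p] f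
    fun j => (smodEq_iff _ _ _).2 (h j)
  obtain ⟨x, hx⟩ := IsPrecomplete.prec inferInstance s.property
  exact ⟨x, fun j => (smodEq_iff _ _ _).1 (hx j)⟩

lemma exists_limit_of_forall_eq_add_p_pow_smul {f : ℕ → Matrix n n ℤ_[p]}
    (h : ∀ j, ∃ C : Matrix n n ℤ_[p], f (j + 1) = f j + (p : ℤ_[p]) ^ j • C) :
    ∃ X, ∀ j, ∃ C : Matrix n n ℤ_[p], X = f j + (p : ℤ_[p]) ^ j • C := by
  choose C hC using h
  choose X c hc using fun a b =>
    exists_limit_of_forall_eq_add_p_pow_mul (f := fun j => f j a b) fun j =>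
      ⟨C j a b, congrFun₂ (hC j) a b⟩
  exact ⟨Matrix.of X, fun j => ⟨Matrix.of fun a b => c a b j, Matrix.ext fun a b => hc a b j⟩⟩

lemma eq_of_forall_eq_add_p_pow_smul {A B : Matrix n n ℤ_[p]}
    (h : ∀ j : ℕ, ∃ C : Matrix n n ℤ_[p], A = B + (p : ℤ_[p]) ^ j • C) : A = B := by
  choose C hC using h
  exact Matrix.ext fun a b => sub_eq_zero.1 <| eq_zero_of_forall_p_pow_dvd fun j =>
    ⟨C j a b, sub_eq_iff_eq_add'.2 (congrFun₂ (hC j) a b)⟩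

lemma isUnit_one_add_of_p_dvd {x : ℤ_[p]} (hx : (p : ℤ_[p]) ∣ x) : IsUnit (1 + x) := by
  have hnon : -x ∈ nonunits ℤ_[p] := by
    rw [← IsLocalRing.mem_maximalIdeal, PadicInt.maximalIdeal_eq_span_p,
      Ideal.mem_span_singleton, dvd_neg]
    exact hx
  simpa using IsLocalRing.isUnit_one_sub_self_of_mem_nonunits _ hnon

variable [Fintype n] [DecidableEq n]

lemma one_add_p_pow_smul_eq_one_of_pow_eq_one {k m : ℕ} (hm : ¬ (p : ℤ_[p]) ^ k ∣ m)
    {A : Matrix n n ℤ_[p]} (hA : (1 + (p : ℤ_[p]) ^ k • A) ^ m = 1) :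
    1 + (p : ℤ_[p]) ^ k • A = 1 := by
  by_contra h
  obtain ⟨c, hc, Y, rfl, i, j, hij⟩ := exists_eq_smul_of_ne_zero (A := A) fun h0 => h (by simp [h0])
  rw [smul_smul] at hA
  obtain ⟨S, hS⟩ := exists_one_add_pow_eq ((p : ℤ_[p]) ^ k * c) Y m
  have hzero : (m : ℤ_[p]) • Y + ((p : ℤ_[p]) ^ k * c) • S = 0 :=
    (smul_eq_zero.1 (by simpa [hA] using hS)).resolve_left
      (mul_ne_zero (pow_ne_zero k p_ne_zero) hc)
  have hentry : (m : ℤ_[p]) * Y i j + (p ^ k * c) * S i j = 0 := congrFun₂ hzero i j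
  exact hm ⟨-(c * S i j), by rw [hij] at hentry; linear_combination hentry⟩

lemma exists_one_add_smul_pow_p_eq (d : ℤ_[p]) (j : ℕ) (Z : Matrix n n ℤ_[p]) :
    ∃ S : Matrix n n ℤ_[p], (1 + (p ^ 2 * d * p ^ j : ℤ_[p]) • Z) ^ p =
      1 + (p ^ 2 * d * p ^ (j + 1) : ℤ_[p]) • (Z + (p : ℤ_[p]) ^ (j + 1) • S) := by
  obtain ⟨S, hS⟩ := exists_one_add_pow_eq (p ^ 2 * d * p ^ j : ℤ_[p]) Z p
  exact ⟨d • S, by rw [hS]; module⟩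

-- The limit of `((1 + c • Y) ^ p ^ j - 1) / (c * p ^ j)` is `log (1 + c • Y) / c`.
lemma exists_log {c : ℤ_[p]} (hc : (p : ℤ_[p]) ^ 2 ∣ c) (Y : Matrix n n ℤ_[p]) :
    ∃ X : Matrix n n ℤ_[p], (∃ D : Matrix n n ℤ_[p], X = Y + (p : ℤ_[p]) • D) ∧
      ∀ j : ℕ, ∃ C : Matrix n n ℤ_[p],
        (1 + c • Y) ^ p ^ j = 1 + (c * p ^ j) • (X + (p : ℤ_[p]) ^ j • C) := by
  obtain ⟨d, rfl⟩ := hc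
  choose S hS using exists_one_add_smul_pow_p_eq (n := n) d
  let Z : ℕ → Matrix n n ℤ_[p] := Nat.rec Y fun j Z => Z + (p : ℤ_[p]) ^ (j + 1) • S j Z
  have hZ (j : ℕ) : (1 + (p ^ 2 * d : ℤ_[p]) • Y) ^ p ^ j =
      1 + (p ^ 2 * d * p ^ j : ℤ_[p]) • Z j := by
    induction j with
    | zero => simp [Z]
    | succ j ih => rw [pow_succ p, pow_mul, ih, hS]
  have hstep (j : ℕ) : Z (j + 1) = Z j + (p : ℤ_[p]) ^ (j + 1) • S j (Z j) := rfl
  obtain ⟨X, hX⟩ := exists_limit_of_forall_eq_add_p_pow_smul (f := Z) fun j =>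
    ⟨(p : ℤ_[p]) • S j (Z j), by rw [hstep]; module⟩
  refine ⟨X, ?_, fun j => ?_⟩
  · obtain ⟨C, hC⟩ := hX 1
    exact ⟨S 0 Y + C, by rw [hC, show Z 1 = Y + (p : ℤ_[p]) ^ 1 • S 0 Y from rfl]; module⟩
  · obtain ⟨C, hC⟩ := hX j
    exact ⟨-C, by rw [hZ, hC, smul_neg, add_neg_cancel_right]⟩

open Polynomial in
lemma exists_one_add_eq_pow {q : ℤ_[p]} (hq : (p : ℤ_[p]) ∣ q) (m : ℕ) (w : ℤ_[p]) :
    ∃ u : ℤ_[p], 1 + m ^ 2 * q * w = (1 + m * q * u) ^ m := by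
  obtain ⟨S, hS⟩ := powAddExpansion (1 : ℤ_[p][X]) (C (m * q) * X) m
  let F : ℤ_[p][X] := X - C w + C q * (X ^ 2 * S)
  have hF : ‖F.aeval w‖ < 1 := by
    rw [show F.aeval w = q * (w ^ 2 * S.eval w) by simp [F]]
    exact (PadicInt.norm_lt_one_iff_dvd _).2 (hq.mul_right _)
  have hF' : ‖F.derivative.aeval w‖ = 1 := by
    rw [← PadicInt.isUnit_iff]
    convert! isUnit_one_add_of_p_dvd (hq.mul_right ((X ^ 2 * S).derivative.eval w)) using 1
    simp [F]
  obtain ⟨u, hu, -⟩ := hensels_lemma (F := F) (a := w) (by rwa [hF', one_pow])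
  have hroot : u - w + q * (u ^ 2 * S.eval u) = 0 := by simpa [F] using hu
  have hpow : (1 + m * q * u) ^ m = 1 + m * (m * q * u) + S.eval u * (m * q * u) ^ 2 := by
    simpa using congrArg (eval u) hS
  exact ⟨u, by rw [hpow]; linear_combination -(m ^ 2 * q) * hroot⟩

lemma exists_one_add_smul_eq_smul_coe {q : ℤ_[p]} (hq : (p : ℤ_[p]) ∣ q) (R : Matrix n n ℤ_[p]) :
    ∃ v : ℤ_[p], v ≠ 0 ∧ ∃ g : SL n ℤ_[p],
      1 + ((Fintype.card n : ℤ_[p]) ^ 2 * q) • R = v • (g : Matrix n n ℤ_[p]) := by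
  set N := Fintype.card n
  set P := 1 + ((N : ℤ_[p]) ^ 2 * q) • R
  obtain ⟨u, hu⟩ : ∃ u, P.det = (1 + N * q * u) ^ N := by
    rw [Matrix.det_one_add_smul]
    obtain ⟨u, hu⟩ := exists_one_add_eq_pow hq N (R.trace +
      (det (1 + (Polynomial.X : Polynomial ℤ_[p]) • R.map Polynomial.C)).divX.divX.eval
        (N ^ 2 * q) * (N ^ 2 * q))
    exact ⟨u, by rw [← hu]; ring⟩
  obtain ⟨v, hv⟩ := isUnit_one_add_of_p_dvd ((hq.mul_left N).mul_right u)
  refine ⟨v, v.ne_zero, ⟨(v⁻¹ : ℤ_[p]ˣ) • P, ?_⟩, (smul_inv_smul v P).symm⟩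
  rw [← hv] at hu
  rw [Units.smul_def, Matrix.det_smul, hu, ← mul_pow, Units.inv_mul, one_pow]

end Matrices

/-! ### Finite subgroups -/

section Ad

variable {R : Type*} [CommRing R] {n : Type*} [Fintype n] [DecidableEq n]

/-- The adjoint action `X ↦ g X g⁻¹` of `SL n R` on all matrices, by algebra automorphisms. -/
def Ad : SL n R →* (Matrix n n R ≃ₐ[R] Matrix n n R) :=
  (MulSemiringAction.toAlgAut (ConjAct (Matrix n n R)ˣ) R (Matrix n n R)).comp
    (ConjAct.toConjAct.toMonoidHom.comp Matrix.SpecialLinearGroup.toGL)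

lemma Ad_apply (g : SL n R) (X : Matrix n n R) :
    Ad g X = (g : Matrix n n R) * X * ((g⁻¹ : SL n R) : Matrix n n R) := rfl

lemma Ad_apply_mul_coe (g : SL n R) (X : Matrix n n R) :
    Ad g X * (g : Matrix n n R) = (g : Matrix n n R) * X := by
  rw [Ad_apply, mul_assoc, ← Matrix.SpecialLinearGroup.coe_mul, inv_mul_cancel,
    Matrix.SpecialLinearGroup.coe_one, mul_one]

lemma Ad_eq_iff {g : SL n R} {X Y : Matrix n n R} :
    Ad g X = Y ↔ (g : Matrix n n R) * X = Y * (g : Matrix n n R) := by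
  rw [← Ad_apply_mul_coe]
  exact (Matrix.SpecialLinearGroup.toGL g).isUnit.mul_left_inj.symm

lemma Ad_coe (g h : SL n R) :
    Ad g (h : Matrix n n R) = ((g * h * g⁻¹ : SL n R) : Matrix n n R) := by
  simp only [Ad_apply, Matrix.SpecialLinearGroup.coe_mul]

lemma Ad_eq_of_mul_eq_mul [IsDomain R] {A B : Matrix n n R} {v : R} (hv : v ≠ 0) {g : SL n R}
    (h : A * (v • (g : Matrix n n R)) = (v • (g : Matrix n n R)) * B) : Ad g B = A := by
  rw [mul_smul_comm, smul_mul_assoc] at h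
  exact Ad_eq_iff.2 (smul_right_injective _ hv h).symm

lemma coe_mul_sum_eq_sum_mul_coe {F : Type*} [Group F] [Fintype F] (φ ψ : F →* SL n R) (a : F) :
    (ψ a : Matrix n n R) * ∑ f, ((ψ f * (φ f)⁻¹ : SL n R) : Matrix n n R) =
      (∑ f, ((ψ f * (φ f)⁻¹ : SL n R) : Matrix n n R)) * (φ a : Matrix n n R) := by
  rw [Finset.mul_sum, Finset.sum_mul]
  refine Fintype.sum_equiv (Equiv.mulLeft a) _ _ fun f => ?_
  simp only [← Matrix.SpecialLinearGroup.coe_mul, Equiv.coe_mulLeft, map_mul, _root_.mul_inv_rev]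
  group

end Ad

section FiniteSubgroups

variable {p : ℕ} [Fact p.Prime] {n : Type*} [Fintype n] [DecidableEq n]

-- Averaging `ψ f * (φ f)⁻¹` over `f` gives a matrix close to `|F|` that intertwines `φ` and `ψ`.
lemma exists_forall_eq_conj_of_congr {F : Type*} [Group F] [Fintype F] (φ ψ : F →* SL n ℤ_[p])
    (h : ∀ f, ∃ C : Matrix n n ℤ_[p], (ψ f : Matrix n n ℤ_[p]) =
      φ f + (Fintype.card F * (Fintype.card n ^ 2 * p) : ℤ_[p]) • C) :
    ∃ g : SL n ℤ_[p], ∀ f, g * φ f * g⁻¹ = ψ f := by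
  choose C hC using h
  have hF : (Fintype.card F : ℤ_[p]) ≠ 0 := Nat.cast_ne_zero.2 Fintype.card_ne_zero
  obtain ⟨v, hv, g, hg⟩ := exists_one_add_smul_eq_smul_coe (dvd_refl (p : ℤ_[p]))
    (∑ f, C f * (((φ f)⁻¹ : SL n ℤ_[p]) : Matrix n n ℤ_[p]))
  have hsum : ∑ f, ((ψ f * (φ f)⁻¹ : SL n ℤ_[p]) : Matrix n n ℤ_[p]) =
      ((Fintype.card F : ℤ_[p]) * v) • (g : Matrix n n ℤ_[p]) := by
    have hterm (f : F) : ((ψ f * (φ f)⁻¹ : SL n ℤ_[p]) : Matrix n n ℤ_[p]) =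
        1 + (Fintype.card F * (Fintype.card n ^ 2 * p) : ℤ_[p]) •
          (C f * (((φ f)⁻¹ : SL n ℤ_[p]) : Matrix n n ℤ_[p])) := by
      rw [Matrix.SpecialLinearGroup.coe_mul, hC, add_mul, ← Matrix.SpecialLinearGroup.coe_mul,
        mul_inv_cancel, Matrix.SpecialLinearGroup.coe_one, smul_mul_assoc]
    simp only [hterm, Finset.sum_add_distrib, ← Finset.smul_sum, Finset.sum_const,
      Finset.card_univ, mul_smul, ← hg, smul_add, Nat.cast_smul_eq_nsmul]
  refine ⟨g, fun f => Subtype.ext ?_⟩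
  rw [← Ad_coe]
  refine Ad_eq_of_mul_eq_mul (mul_ne_zero hF hv) ?_
  rw [← hsum]
  exact coe_mul_sum_eq_sum_mul_coe φ ψ f

lemma injective_domRestrict_reduction {H : Subgroup (SL n ℤ_[p])} {k : ℕ}
    (hk : ¬ (p : ℤ_[p]) ^ k ∣ Nat.card H) : Function.Injective ((reduction k).domRestrict H) := by
  rw [injective_iff_map_eq_one]
  intro h hh
  obtain ⟨A, hA⟩ := mem_congruenceSubgroup_iff.1 (show (h : SL n ℤ_[p]) ∈ congruenceSubgroup p n k
    from MonoidHom.mem_ker.2 hh)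
  have hpow : (1 + (p : ℤ_[p]) ^ k • A) ^ Nat.card H = 1 := by
    rw [← hA, ← Matrix.SpecialLinearGroup.coe_pow, ← Subgroup.coe_pow, pow_card_eq_one',
      Subgroup.coe_one, Matrix.SpecialLinearGroup.coe_one]
  exact Subtype.ext <| Subtype.ext <|
    hA.trans (one_add_p_pow_smul_eq_one_of_pow_eq_one hk hpow)

lemma exists_conj_eq_of_map_reduction_eq {H H' : Subgroup (SL n ℤ_[p])} [Finite H] {k : ℕ}
    (hk : (Nat.card H * (Fintype.card n ^ 2 * p) : ℤ_[p]) ∣ p ^ k)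
    (hH : ¬ (p : ℤ_[p]) ^ k ∣ Nat.card H) (hH' : ¬ (p : ℤ_[p]) ^ k ∣ Nat.card H')
    (h : H.map (reduction k) = H'.map (reduction k)) :
    ∃ g : SL n ℤ_[p], MulAut.conj g • H = H' := by
  have := Fintype.ofFinite H
  rw [← MonoidHom.domRestrict_range, ← MonoidHom.domRestrict_range] at h
  let e : H ≃* H' := (MonoidHom.ofInjective (injective_domRestrict_reduction hH)).trans
    ((MulEquiv.subgroupCongr h).trans
      (MonoidHom.ofInjective (injective_domRestrict_reduction hH')).symm)
  have he (x : H) : reduction k (e x : SL n ℤ_[p]) = reduction k (x : SL n ℤ_[p]) :=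
    congrArg Subtype.val (MulEquiv.apply_symm_apply (MonoidHom.ofInjective
      (injective_domRestrict_reduction hH')) _)
  obtain ⟨c, hc⟩ := hk
  obtain ⟨g, hg⟩ := exists_forall_eq_conj_of_congr H.subtype (H'.subtype.comp e.toMonoidHom)
    fun x => by
      obtain ⟨C, hC⟩ := reduction_eq_iff.1 (he x)
      refine ⟨c • C, ?_⟩
      rw [smul_smul, ← Nat.card_eq_fintype_card (α := H), ← hc]
      exact hC
  refine ⟨g, le_antisymm ?_ fun y hy => ?_⟩
  · rintro _ ⟨x, hx, rfl⟩
    exact Set.mem_of_eq_of_mem (hg ⟨x, hx⟩) (e ⟨x, hx⟩).2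
  · refine ⟨e.symm ⟨y, hy⟩, (e.symm ⟨y, hy⟩).2, (hg _).trans ?_⟩
    simp

theorem countableUpToConj_finite [Nonempty n] :
    CountableUpToConj {H : Subgroup (SL n ℤ_[p]) | Finite H} := by
  have hlevel (H : {H : Subgroup (SL n ℤ_[p]) | Finite H}) :
      ∃ k : ℕ, (Nat.card H.1 * (Fintype.card n ^ 2 * p) : ℤ_[p]) ∣ p ^ k := by
    have : Finite H.1 := H.2
    exact exists_dvd_p_pow (by simp [Nat.card_pos.ne', NeZero.ne p])
  choose k hk using hlevel
  have not_dvd (H) : ¬ (p : ℤ_[p]) ^ k H ∣ Nat.card H.1 := fun hdvd =>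
    Nat.not_succ_le_self (k H) <| (pow_dvd_pow_iff p_ne_zero PadicInt.prime_p.not_isUnit).1 <|
      (pow_succ (p : ℤ_[p]) (k H)).dvd.trans <|
        (mul_dvd_mul hdvd (Dvd.intro_left _ rfl)).trans (hk H)
  rw [← Subtype.range_val (s := {H : Subgroup (SL n ℤ_[p]) | Finite H})]
  refine countableUpToConj_range_of_code (β := Σ k, Subgroup (SL n (ZMod (p ^ k))))
    (fun H => ⟨k H, H.1.map (reduction (k H))⟩) fun H H' hcode => ?_
  obtain ⟨hkk, hmap⟩ := Sigma.mk.inj_iff.1 hcode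
  rw [hkk] at hmap
  have : Finite H.1 := H.2
  exact exists_conj_eq_of_map_reduction_eq (hkk ▸ hk H) (hkk ▸ not_dvd H) (not_dvd H')
    (eq_of_heq hmap)

end FiniteSubgroups

/-! ### The Lie algebra of a subgroup -/

section Tangent

variable {p : ℕ} [Fact p.Prime] {n : Type*} [Fintype n] [DecidableEq n]

local notation "Γ" => congruenceSubgroup p n

/-- `X` is, up to an error divisible by `p ^ r`, the leading coefficient of an element
`1 + p ^ k X + ⋯` of `H`. -/
def IsApproxTangent (H : Subgroup (SL n ℤ_[p])) (k r : ℕ) (X : Matrix n n ℤ_[p]) : Prop :=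
  ∃ h ∈ H, ∃ C : Matrix n n ℤ_[p],
    (h : Matrix n n ℤ_[p]) = 1 + (p : ℤ_[p]) ^ k • (X + (p : ℤ_[p]) ^ r • C)

variable {H M : Subgroup (SL n ℤ_[p])} {k r : ℕ} {X Y : Matrix n n ℤ_[p]}

lemma isApproxTangent_zero : IsApproxTangent H k r 0 := ⟨1, one_mem H, 0, by simp⟩

lemma IsApproxTangent.add (hrk : r ≤ k) (hX : IsApproxTangent H k r X)
    (hY : IsApproxTangent H k r Y) : IsApproxTangent H k r (X + Y) := by
  obtain ⟨g, hg, C, hC⟩ := hX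
  obtain ⟨h, hh, D, hD⟩ := hY
  obtain ⟨t, rfl⟩ := Nat.exists_eq_add_of_le hrk
  refine ⟨g * h, mul_mem hg hh, C + D + (p : ℤ_[p]) ^ t •
    ((X + (p : ℤ_[p]) ^ r • C) * (Y + (p : ℤ_[p]) ^ r • D)), ?_⟩
  rw [Matrix.SpecialLinearGroup.coe_mul, hC, hD, add_mul, one_mul, mul_add, mul_one,
    smul_mul_smul_comm]
  module

lemma IsApproxTangent.smul (hrk : r ≤ k) (hX : IsApproxTangent H k r X) (s : ℤ_[p]) :
    IsApproxTangent H k r (s • X) := by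
  have hnat (m : ℕ) : IsApproxTangent H k r ((m : ℤ_[p]) • X) := by
    induction m with
    | zero => simpa using isApproxTangent_zero
    | succ m ih =>
      rw [Nat.cast_succ, add_smul, one_smul]
      exact ih.add hrk hX
  obtain ⟨m, t, rfl⟩ := exists_eq_natCast_add_p_pow_mul s r
  obtain ⟨h, hh, C, hC⟩ := hnat m
  exact ⟨h, hh, C - t • X, by rw [hC]; module⟩

/-- The Lie algebra of `H`: the matrices `X` such that `H` contains elements of the form
`1 + p ^ k (X + o(1))` for all large `k`. -/
def tangent (H : Subgroup (SL n ℤ_[p])) : Submodule ℤ_[p] (Matrix n n ℤ_[p]) where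
  carrier := {X | ∀ r, ∃ K, ∀ k ≥ K, IsApproxTangent H k r X}
  zero_mem' r := ⟨0, fun _ _ => isApproxTangent_zero⟩
  add_mem' hX hY r := by
    obtain ⟨K₁, h₁⟩ := hX r
    obtain ⟨K₂, h₂⟩ := hY r
    exact ⟨max r (max K₁ K₂), fun k hk => (h₁ k (by grind)).add (by grind) (h₂ k (by grind))⟩
  smul_mem' s X hX r := by
    obtain ⟨K, hK⟩ := hX r
    exact ⟨max r K, fun k hk => (hK k (by grind)).smul (by grind) s⟩

lemma mem_tangent_iff : X ∈ tangent H ↔ ∀ r, ∃ K, ∀ k ≥ K, IsApproxTangent H k r X := Iff.rfl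

lemma exists_isApproxTangent_of_mem_tangent (hX : X ∈ tangent H) (r : ℕ) :
    ∃ k ≥ r, IsApproxTangent H k r X := by
  obtain ⟨K, hK⟩ := hX r
  exact ⟨max r K, le_max_left _ _, hK _ (le_max_right _ _)⟩

lemma tangent_mono (hHM : H ≤ M) : tangent H ≤ tangent M := fun _ hX r => by
  obtain ⟨K, hK⟩ := hX r
  refine ⟨K, fun k hk => ?_⟩
  obtain ⟨h, hh, hC⟩ := hK k hk
  exact ⟨h, hHM hh, hC⟩

lemma mem_tangent_of_p_pow_smul_mem {m : ℕ} (hX : (p : ℤ_[p]) ^ m • X ∈ tangent H) :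
    X ∈ tangent H := by
  intro r
  obtain ⟨K, hK⟩ := hX (r + m)
  refine ⟨K + m, fun k hk => ?_⟩
  obtain ⟨l, rfl⟩ := Nat.exists_eq_add_of_le' ((Nat.le_add_left m K).trans hk)
  obtain ⟨h, hh, C, hC⟩ := hK l (by lia)
  exact ⟨h, hh, C, by rw [hC]; module⟩

lemma mem_tangent_of_smul_mem {c : ℤ_[p]} (hc : c ≠ 0) (hX : c • X ∈ tangent H) :
    X ∈ tangent H := by
  obtain ⟨m, d, hd⟩ := exists_dvd_p_pow hc
  refine mem_tangent_of_p_pow_smul_mem (m := m) ?_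
  rw [hd, mul_comm, mul_smul]
  exact (tangent H).smul_mem d hX

lemma Ad_mem_tangent {g : SL n ℤ_[p]} (hg : g ∈ H) (hX : X ∈ tangent H) :
    Ad g X ∈ tangent H := by
  intro r
  obtain ⟨K, hK⟩ := hX r
  refine ⟨K, fun k hk => ?_⟩
  obtain ⟨h, hh, C, hC⟩ := hK k hk
  exact ⟨g * h * g⁻¹, mul_mem (mul_mem hg hh) (inv_mem hg), Ad g C, by
    rw [← Ad_coe, hC]; simp only [map_add, map_one, map_smul]⟩

lemma p_pow_dvd_trace_of_coe_eq {g : SL n ℤ_[p]} {A : Matrix n n ℤ_[p]}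
    (hg : (g : Matrix n n ℤ_[p]) = 1 + (p : ℤ_[p]) ^ k • A) : (p : ℤ_[p]) ^ k ∣ A.trace := by
  obtain ⟨d, hd⟩ : ∃ d, (1 + (p : ℤ_[p]) ^ k • A).det = 1 + A.trace * p ^ k + d * (p ^ k) ^ 2 :=
    ⟨_, Matrix.det_one_add_smul _ _⟩
  have hdet := g.det_coe
  rw [hg, hd] at hdet
  have hcancel : (p : ℤ_[p]) ^ k * (A.trace + p ^ k * d) = 0 := by linear_combination hdet
  have hsum := (mul_eq_zero.1 hcancel).resolve_left (pow_ne_zero k p_ne_zero)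
  exact ⟨-d, by linear_combination hsum⟩

lemma trace_eq_zero_of_mem_tangent (hX : X ∈ tangent H) : X.trace = 0 := by
  refine eq_zero_of_forall_p_pow_dvd fun r => ?_
  obtain ⟨k, hrk, h, -, C, hC⟩ := exists_isApproxTangent_of_mem_tangent hX r
  have htrace := (pow_dvd_pow (p : ℤ_[p]) hrk).trans (p_pow_dvd_trace_of_coe_eq hC)
  rw [Matrix.trace_add, Matrix.trace_smul, smul_eq_mul] at htrace
  exact (dvd_add_left (dvd_mul_right _ _)).1 htrace

lemma exists_forall_isApproxTangent (H : Subgroup (SL n ℤ_[p])) (r : ℕ) :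
    ∃ K, ∀ k ≥ K, ∀ X ∈ tangent H, IsApproxTangent H k r X := by
  obtain ⟨s, hs⟩ := IsNoetherian.noetherian (tangent H)
  have hmem (X : Matrix n n ℤ_[p]) (hX : X ∈ s) : X ∈ tangent H :=
    hs ▸ Submodule.subset_span hX
  choose! K hK using fun X hX => mem_tangent_iff.1 (hmem X hX) r
  refine ⟨max r (s.sup K), fun k hk X hX => ?_⟩
  have hrk : r ≤ k := (le_max_left _ _).trans hk
  rw [← hs] at hX
  induction hX using Submodule.span_induction with
  | mem X hX => exact hK X hX k ((Finset.le_sup hX).trans ((le_max_right _ _).trans hk))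
  | zero => exact isApproxTangent_zero
  | add X Y _ _ hX hY => exact hX.add hrk hY
  | smul s X _ hX => exact hX.smul hrk s

-- `X` is the `p`-adic logarithm of `h`, divided by `p ^ k * c`.
lemma exists_log_mem_tangent {h : SL n ℤ_[p]} (hh : h ∈ H) (hh1 : h ≠ 1) (hk : 2 ≤ k)
    {A : Matrix n n ℤ_[p]} (hA : (h : Matrix n n ℤ_[p]) = 1 + (p : ℤ_[p]) ^ k • A) :
    ∃ X ∈ tangent H, X ≠ 0 ∧ Commute X (h : Matrix n n ℤ_[p]) ∧
      ∃ c : ℤ_[p], ∃ D : Matrix n n ℤ_[p], A = c • X + (p : ℤ_[p]) • D := by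
  obtain ⟨c, hc, Y, rfl, i, j, hij⟩ := exists_eq_smul_of_ne_zero (A := A) fun hA0 =>
    hh1 (Subtype.ext (by simpa [hA0] using hA))
  set q := (p : ℤ_[p]) ^ k * c with hq
  have hq0 : q ≠ 0 := mul_ne_zero (pow_ne_zero _ p_ne_zero) hc
  rw [smul_smul, ← hq] at hA
  obtain ⟨X, ⟨D, hD⟩, hlog⟩ := exists_log (c := q) ((pow_dvd_pow _ hk).trans (dvd_mul_right _ _)) Y
  refine ⟨X, mem_tangent_of_smul_mem hq0 fun r => ⟨r, fun l hl => ?_⟩, ?_, ?_, c, -c • D, ?_⟩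
  · obtain ⟨C, hC⟩ := hlog l
    obtain ⟨t, rfl⟩ := Nat.exists_eq_add_of_le hl
    exact ⟨h ^ p ^ (r + t), pow_mem hh _, (q * p ^ t) • C, by
      rw [Matrix.SpecialLinearGroup.coe_pow, hA, hC]; module⟩
  · rintro rfl
    have hDij : 0 = 1 + p * D i j := by simpa [hij] using congrFun₂ hD i j
    exact not_isUnit_zero (hDij ▸ isUnit_one_add_of_p_dvd (dvd_mul_right _ _))
  · refine eq_of_forall_eq_add_p_pow_smul fun l => ?_
    obtain ⟨C, hC⟩ := hlog l
    have hpow := ((Commute.refl (h : Matrix n n ℤ_[p])).pow_left (p ^ l)).eq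
    rw [hA, hC, ← hA, add_mul, mul_add, one_mul, mul_one, smul_mul_assoc, mul_smul_comm] at hpow
    have hcomm := smul_right_injective _ (mul_ne_zero hq0 (pow_ne_zero l p_ne_zero))
      (add_left_cancel hpow)
    rw [add_mul, mul_add, smul_mul_assoc, mul_smul_comm] at hcomm
    exact ⟨h * C - C * h, by rw [smul_sub, ← add_sub_assoc, ← hcomm, add_sub_cancel_right]⟩
  · rw [hD]; module

-- Modulo `p`, the leading term of an element of `M` is its logarithm, hence a leading term of `H`.
lemma openIn_of_tangent_le (hH : IsClosed (H : Set (SL n ℤ_[p]))) (hHM : H ≤ M)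
    (htangent : tangent M ≤ tangent H) : OpenIn Γ M H := by
  obtain ⟨K, hK⟩ := exists_forall_isApproxTangent H 1
  refine ⟨hHM, max 2 K, inf_congruenceSubgroup_le_of_forall_exists_reduction_eq hH hHM ?_⟩
  rintro k hk g ⟨hgM, hgk⟩
  by_cases hg1 : g = 1
  · exact ⟨1, one_mem H, by rw [hg1]⟩
  obtain ⟨A, hA⟩ := mem_congruenceSubgroup_iff.1 hgk
  obtain ⟨X, hX, -, -, c, D, hD⟩ := exists_log_mem_tangent hgM hg1 (le_of_max_le_left hk) hA
  obtain ⟨h, hh, C, hC⟩ := hK k (le_of_max_le_right hk) (c • X)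
    ((tangent H).smul_mem c (htangent hX))
  exact ⟨h, hh, reduction_eq_iff.2 ⟨C - D, by rw [hC, hA, hD]; module⟩⟩

lemma exists_ne_one_mem_inf_of_infinite {G : Type*} [Group G] {H N : Subgroup G} [N.FiniteIndex]
    (hH : ¬ Finite H) : ∃ h ∈ H, h ∈ N ∧ h ≠ 1 := by
  by_contra! hone
  have hinf : H ⊓ N = ⊥ := (Subgroup.eq_bot_iff_forall _).2 fun h hh => hone h hh.1 hh.2
  refine hH (Nat.finite_of_card_ne_zero ?_)
  rw [← Subgroup.relIndex_bot_left, ← hinf, Subgroup.inf_relIndex_left]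
  exact Subgroup.FiniteIndex.index_ne_zero

lemma tangent_ne_bot_of_infinite (hH : ¬ Finite H) : tangent H ≠ ⊥ := by
  obtain ⟨h, hh, hh2, hh1⟩ := exists_ne_one_mem_inf_of_infinite (N := Γ 2) hH
  obtain ⟨A, hA⟩ := mem_congruenceSubgroup_iff.1 hh2
  obtain ⟨X, hX, hX0, -⟩ := exists_log_mem_tangent hh hh1 le_rfl hA
  exact (Submodule.ne_bot_iff _).2 ⟨X, hX, hX0⟩

end Tangent

/-! ### Traceless `2 × 2` matrices -/

section AdInvariants

variable {R : Type*} [CommRing R] {n : Type*} [Fintype n] [DecidableEq n]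

lemma trace_Ad (g : SL n R) (X : Matrix n n R) : (Ad g X).trace = X.trace := by
  rw [Ad_apply, Matrix.trace_mul_cycle, ← Matrix.SpecialLinearGroup.coe_mul, inv_mul_cancel,
    Matrix.SpecialLinearGroup.coe_one, one_mul]

lemma det_Ad (g : SL n R) (X : Matrix n n R) : (Ad g X).det = X.det := by
  rw [Ad_apply, Matrix.det_mul, Matrix.det_mul, Matrix.SpecialLinearGroup.det_coe,
    Matrix.SpecialLinearGroup.det_coe, one_mul, mul_one]

lemma Ad_mul_apply (g h : SL n R) (X : Matrix n n R) : Ad (g * h) X = Ad g (Ad h X) := by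
  rw [map_mul, AlgEquiv.mul_apply]

end AdInvariants

section TracelessTwoByTwo

variable {R : Type*} [CommRing R]

lemma eq_of_trace_eq_zero {X : Matrix (Fin 2) (Fin 2) R} (hX : X.trace = 0) :
    X = !![X 0 0, X 0 1; X 1 0, -X 0 0] := by
  rw [Matrix.trace_fin_two] at hX
  conv_lhs => rw [Matrix.eta_fin_two X, eq_neg_of_add_eq_zero_right hX]

lemma mul_self_of_trace_eq_zero {X : Matrix (Fin 2) (Fin 2) R} (hX : X.trace = 0) :
    X * X = (-X.det) • (1 : Matrix (Fin 2) (Fin 2) R) := by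
  rw [eq_of_trace_eq_zero hX]
  ext i j
  fin_cases i <;> fin_cases j <;> simp <;> ring

-- Cramer's rule in the three-dimensional space of traceless matrices, whose volume form is
-- `tr ([X, Y] W)`.
lemma trace_commutator_mul_smul {X Y W V : Matrix (Fin 2) (Fin 2) R} (hX : X.trace = 0)
    (hY : Y.trace = 0) (hW : W.trace = 0) (hV : V.trace = 0) :
    (⁅X, Y⁆ * W).trace • V =
      (⁅V, Y⁆ * W).trace • X + (⁅X, V⁆ * W).trace • Y + (⁅X, Y⁆ * V).trace • W := by
  rw [eq_of_trace_eq_zero hX, eq_of_trace_eq_zero hY, eq_of_trace_eq_zero hW,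
    eq_of_trace_eq_zero hV]
  ext i j
  fin_cases i <;> fin_cases j <;>
    simp [Ring.lie_def, Matrix.trace_fin_two] <;> ring

lemma lie_commutator_of_trace_eq_zero {X Y V : Matrix (Fin 2) (Fin 2) R} (hX : X.trace = 0)
    (hY : Y.trace = 0) (hV : V.trace = 0) :
    ⁅V, ⁅X, Y⁆⁆ = (-2 * (V * Y).trace) • X + (2 * (V * X).trace) • Y := by
  rw [eq_of_trace_eq_zero hX, eq_of_trace_eq_zero hY, eq_of_trace_eq_zero hV]
  ext i j
  fin_cases i <;> fin_cases j <;>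
    simp [Ring.lie_def, Matrix.trace_fin_two] <;> ring

lemma smul_eq_smul_of_strictUpper {X V : Matrix (Fin 2) (Fin 2) R} (hX : X.trace = 0)
    (hX10 : X 1 0 = 0) (hX00 : X 0 0 = 0) (hV : V.trace = 0) (hV10 : V 1 0 = 0) (hV00 : V 0 0 = 0) :
    X 0 1 • V = V 0 1 • X := by
  rw [eq_of_trace_eq_zero hX, eq_of_trace_eq_zero hV, hX10, hX00, hV10, hV00]
  simp [mul_comm]

variable [IsDomain R]

lemma smul_eq_smul_of_commute [CharZero R] {X Y : Matrix (Fin 2) (Fin 2) R}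
    (hX : X.trace = 0) (hY : Y.trace = 0) (hXY : Commute X Y) (i j : Fin 2) :
    X i j • Y = Y i j • X := by
  have hdiag := congrFun₂ hXY.eq 0 0
  have hupper := congrFun₂ hXY.eq 0 1
  have hlower := congrFun₂ hXY.eq 1 0
  rw [eq_of_trace_eq_zero hX, eq_of_trace_eq_zero hY] at hdiag hupper hlower ⊢
  simp only [mul_fin_two, of_apply, cons_val', cons_val_zero, cons_val_one, cons_val_fin_one]
    at hdiag hupper hlower
  have h01 : X 0 0 * Y 0 1 = X 0 1 * Y 0 0 :=
    mul_left_cancel₀ (two_ne_zero (α := R)) (by linear_combination hupper)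
  have h10 : X 0 0 * Y 1 0 = X 1 0 * Y 0 0 :=
    mul_left_cancel₀ (two_ne_zero (α := R)) (by linear_combination -hlower)
  ext k l
  fin_cases i <;> fin_cases j <;> fin_cases k <;> fin_cases l <;> simp <;> grind

lemma Ad_eq_or_eq_neg_of_commute [CharZero R] {X : Matrix (Fin 2) (Fin 2) R} (hX : X.trace = 0)
    (hdet : X.det ≠ 0) {h : SL (Fin 2) R} (hXh : Commute X (Ad h X)) :
    Ad h X = X ∨ Ad h X = -X := by
  obtain ⟨i, j, hij⟩ : ∃ i j, X i j ≠ 0 := by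
    by_contra! hzero
    exact hdet (by simp [Matrix.det_fin_two, hzero])
  have hprop := smul_eq_smul_of_commute hX ((trace_Ad h X).trans hX) hXh i j
  have hsq : Ad h X i j ^ 2 = X i j ^ 2 := by
    have hdets := congrArg Matrix.det hprop
    rw [Matrix.det_smul, Matrix.det_smul, det_Ad, Fintype.card_fin] at hdets
    exact (mul_right_cancel₀ hdet hdets).symm
  refine (sq_eq_sq_iff_eq_or_eq_neg.1 hsq).imp (fun hs => ?_) fun hs => ?_ <;>
    exact smul_right_injective _ hij (by simpa [hs] using hprop)

-- Since `Y * Y = 0`, a column of `Y` with a unit entry spans a line killed by `Y`.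
lemma exists_Ad_eq_of_trace_eq_zero_of_det_eq_zero [ValuationRing R]
    {X : Matrix (Fin 2) (Fin 2) R} (hX0 : X ≠ 0) (hX : X.trace = 0) (hdet : X.det = 0) :
    ∃ g : SL (Fin 2) R, ∃ b : R, b ≠ 0 ∧ Ad g X = !![0, b; 0, 0] := by
  obtain ⟨c, hc, Y, rfl, i, j, hij⟩ := exists_eq_smul_of_ne_zero hX0
  have hcop : IsCoprime (Y 0 j) (Y 1 j) := by
    fin_cases i
    · exact hij ▸ isCoprime_one_left
    · exact hij ▸ isCoprime_one_right
  obtain ⟨g, hg0, hg1⟩ := hcop.exists_SL2_col 0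
  have hsq : (c • Y) * Y = 0 := by
    have hsmul := mul_self_of_trace_eq_zero hX
    rw [hdet, neg_zero, zero_smul, mul_smul_comm] at hsmul
    exact (smul_eq_zero.1 hsmul).resolve_left hc
  have hkill (l : Fin 2) : ((c • Y) * (g : Matrix (Fin 2) (Fin 2) R)) l 0 = 0 := by
    have hl := congrFun₂ hsq l j
    rw [Matrix.mul_apply, Fin.sum_univ_two] at hl ⊢
    rwa [hg0, hg1]
  have hcol (k : Fin 2) : Ad g⁻¹ (c • Y) k 0 = 0 := by
    rw [Ad_apply, inv_inv, mul_assoc, Matrix.mul_apply]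
    exact Finset.sum_eq_zero fun l _ => by rw [hkill, mul_zero]
  have hform := eq_of_trace_eq_zero ((trace_Ad g⁻¹ (c • Y)).trans hX)
  rw [hcol, hcol, neg_zero] at hform
  refine ⟨g⁻¹, _, fun hb => hX0 ((map_eq_zero_iff _ (Ad g⁻¹).injective).1 ?_), hform⟩
  rw [hform, hb]
  exact (Matrix.eta_fin_two 0).symm

end TracelessTwoByTwo

/-! ### Normalizers of tori, Borel subgroups and their open subgroups -/

section StabilizerUpToSign

variable {R : Type*} [CommRing R] {n : Type*} [Fintype n] [DecidableEq n]

/-- The subgroup fixing `X` up to sign under the adjoint action. For a traceless `2 × 2` matrix `X`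
of nonzero determinant it is the normalizer of a maximal torus. -/
def stabilizerUpToSign (X : Matrix n n R) : Subgroup (SL n R) where
  carrier := {h | Ad h X = X ∨ Ad h X = -X}
  one_mem' := Or.inl (by simp)
  mul_mem' := by
    rintro g h (hg | hg) (hh | hh) <;> simp [hg, hh]
  inv_mem' := by
    simp only [Set.mem_ofPred_eq, map_inv, AlgEquiv.aut_inv, AlgEquiv.symm_apply_eq, map_neg]
    exact fun h => h.imp Eq.symm fun h => by rw [h, neg_neg]

lemma mem_stabilizerUpToSign_iff {X : Matrix n n R} {h : SL n R} :
    h ∈ stabilizerUpToSign X ↔ Ad h X = X ∨ Ad h X = -X := Iff.rfl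

lemma stabilizerUpToSign_smul [IsDomain R] {c : R} (hc : c ≠ 0) (X : Matrix n n R) :
    stabilizerUpToSign (c • X) = stabilizerUpToSign X := by
  ext h
  simp only [mem_stabilizerUpToSign_iff, map_smul, ← smul_neg, (smul_right_injective _ hc).eq_iff]

lemma conj_smul_stabilizerUpToSign (g : SL n R) (X : Matrix n n R) :
    MulAut.conj g • stabilizerUpToSign X = stabilizerUpToSign (Ad g X) := by
  ext h
  simp only [Subgroup.mem_pointwise_smul_iff_inv_smul_mem, MulAut.smul_def, ← map_inv,
    MulAut.conj_apply, mem_stabilizerUpToSign_iff, Ad_mul_apply, inv_inv]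
  simp only [map_inv, AlgEquiv.aut_inv, AlgEquiv.symm_apply_eq, map_neg]

end StabilizerUpToSign

section TorsionBorel

variable {R : Type*} [CommRing R]

/-- The upper triangular matrices in `SL₂` whose upper left entry is an `m`-th root of unity. For
`m = 0` this is the whole Borel subgroup. -/
def torsionBorel (m : ℕ) : Subgroup (SL (Fin 2) R) where
  carrier := {h | h 1 0 = 0 ∧ h 0 0 ^ m = 1}
  one_mem' := by simp
  mul_mem' := by
    rintro g h ⟨hg, hgm⟩ ⟨hh, hhm⟩
    simp [Matrix.mul_apply, Fin.sum_univ_two, hg, hh, mul_pow, hgm, hhm]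
  inv_mem' := by
    rintro g ⟨hg, hgm⟩
    have hdet := g.det_coe
    rw [Matrix.det_fin_two, hg, mul_zero, sub_zero] at hdet
    refine ⟨by simp [Matrix.adjugate_fin_two, hg], ?_⟩
    calc (g⁻¹ : SL (Fin 2) R) 0 0 ^ m = g 1 1 ^ m := by simp [Matrix.adjugate_fin_two]
      _ = (g 0 0 * g 1 1) ^ m := by rw [mul_pow, hgm, one_mul]
      _ = 1 := by rw [hdet, one_pow]

lemma mem_torsionBorel_iff {m : ℕ} {h : SL (Fin 2) R} :
    h ∈ torsionBorel m ↔ h 1 0 = 0 ∧ h 0 0 ^ m = 1 := Iff.rfl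

lemma mem_torsionBorel_zero_iff {h : SL (Fin 2) R} : h ∈ torsionBorel 0 ↔ h 1 0 = 0 := by
  simp [mem_torsionBorel_iff]

lemma pow_apply_zero_zero_of_mem_torsionBorel {m : ℕ} {h : SL (Fin 2) R} (hh : h ∈ torsionBorel m)
    (l : ℕ) : (h ^ l) 0 0 = h 0 0 ^ l := by
  induction l with
  | zero => simp
  | succ l ih =>
    have hmul : (h ^ (l + 1)) 0 0 = (h ^ l) 0 0 * h 0 0 + (h ^ l) 0 1 * h 1 0 := by
      rw [pow_succ, Matrix.SpecialLinearGroup.coe_mul, Matrix.mul_apply, Fin.sum_univ_two]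
    rw [hmul, ih, hh.1, mul_zero, add_zero, pow_succ]

lemma Ad_apply_zero_zero_of_mem_torsionBorel {m : ℕ} {h : SL (Fin 2) R} (hh : h ∈ torsionBorel m)
    {X : Matrix (Fin 2) (Fin 2) R} (hX : X 1 0 = 0) : Ad h X 0 0 = X 0 0 := by
  have hentry := congrFun₂ (Ad_apply_mul_coe h X) 0 0
  have hlower := congrFun₂ (Ad_apply_mul_coe h X) 1 0
  have hdet := h.det_coe
  rw [Matrix.det_fin_two] at hdet
  simp only [Matrix.mul_apply, Fin.sum_univ_two, hh.1, hX] at hentry hlower hdet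
  linear_combination (h 1 1) * hentry - (Ad h X 0 0 - X 0 0) * hdet

lemma mem_torsionBorel_zero_of_commute [IsDomain R] {h : SL (Fin 2) R} {b : R} (hb : b ≠ 0)
    (hcomm : Commute !![0, b; 0, 0] (Ad h !![0, b; 0, 0])) : h ∈ torsionBorel 0 := by
  have hentry := congrFun₂ hcomm.eq 0 0
  rw [Ad_apply, Matrix.SpecialLinearGroup.coe_inv, Matrix.adjugate_fin_two] at hentry
  rw [mem_torsionBorel_zero_iff]
  simpa [Matrix.mul_apply, Fin.sum_univ_two, hb] using hentry

lemma conj_smul_le_torsionBorel_zero [IsDomain R] {H : Subgroup (SL (Fin 2) R)}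
    {g : SL (Fin 2) R} {b : R} (hb : b ≠ 0) {Z : Matrix (Fin 2) (Fin 2) R}
    (hg : Ad g Z = !![0, b; 0, 0])
    (hZ : ∀ h ∈ H, Commute Z (Ad h Z)) : MulAut.conj g • H ≤ torsionBorel 0 := by
  rintro _ ⟨h, hh, rfl⟩
  refine mem_torsionBorel_zero_of_commute hb ?_
  have hcomm := (hZ h hh).map (Ad g)
  rwa [hg, ← Ad_mul_apply, ← inv_mul_cancel_right (g * h) g, Ad_mul_apply, hg] at hcomm

end TorsionBorel

variable {p : ℕ} [Fact p.Prime]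

section TangentSpaces

lemma commute_of_mem_tangent_stabilizerUpToSign {n : Type*} [Fintype n] [DecidableEq n]
    {X V : Matrix n n ℤ_[p]} (hV : V ∈ tangent (stabilizerUpToSign X)) : Commute V X := by
  refine smul_right_injective _ (two_ne_zero (α := ℤ_[p])) <|
    eq_of_forall_eq_add_p_pow_smul fun r => ?_
  obtain ⟨k, hrk, h, hh, C, hC⟩ := exists_isApproxTangent_of_mem_tangent hV r
  obtain ⟨t, rfl⟩ := Nat.exists_eq_add_of_le hrk
  set B := V + (p : ℤ_[p]) ^ r • C with hB
  rcases hh with hh | hh <;>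
    rw [Ad_eq_iff, hC, add_mul, one_mul, mul_add, mul_one, smul_mul_assoc, mul_smul_comm] at hh
  · have hcomm : B * X = X * B :=
      smul_right_injective _ (pow_ne_zero (r + t) p_ne_zero) (add_left_cancel hh)
    rw [hB, add_mul, mul_add, smul_mul_assoc, mul_smul_comm] at hcomm
    exact ⟨(2 : ℤ_[p]) • (X * C - C * X), by
      linear_combination (norm := module) (2 : ℤ_[p]) • hcomm⟩
  · have htwo : (2 : ℤ_[p]) • X = (p : ℤ_[p]) ^ (r + t) • (-(X * B) - B * X) := by
      rw [neg_mul] at hh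
      linear_combination (norm := module) hh
    have hright := congrArg (V * ·) htwo
    have hleft := congrArg (· * V) htwo
    simp only [mul_smul_comm, smul_mul_assoc] at hright hleft
    exact ⟨(p : ℤ_[p]) ^ t • (V * (-(X * B) - B * X) - (-(X * B) - B * X) * V), by
      simp only
      rw [hright, hleft]
      module⟩

variable {V : Matrix (Fin 2) (Fin 2) ℤ_[p]} {m : ℕ}

lemma apply_one_zero_of_mem_tangent_torsionBorel (hV : V ∈ tangent (torsionBorel m)) :
    V 1 0 = 0 := by
  refine eq_zero_of_forall_p_pow_dvd fun r => ?_
  obtain ⟨k, -, h, ⟨hh, -⟩, C, hC⟩ := exists_isApproxTangent_of_mem_tangent hV r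
  have hentry : V 1 0 + p ^ r * C 1 0 = 0 := by
    simpa [hC, ← mul_add, (Fact.out : p.Prime).ne_zero] using hh
  exact ⟨-C 1 0, by linear_combination hentry⟩

lemma apply_zero_zero_of_mem_tangent_torsionBorel (hm : m ≠ 0)
    (hV : V ∈ tangent (torsionBorel m)) : V 0 0 = 0 := by
  suffices hmV : (m : ℤ_[p]) * V 0 0 = 0 from
    (mul_eq_zero.1 hmV).resolve_left (Nat.cast_ne_zero.2 hm)
  refine eq_zero_of_forall_p_pow_dvd fun r => ?_
  obtain ⟨k, hrk, h, ⟨-, hh⟩, C, hC⟩ := exists_isApproxTangent_of_mem_tangent hV r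
  obtain ⟨t, rfl⟩ := Nat.exists_eq_add_of_le hrk
  obtain ⟨S, hS⟩ := exists_one_add_pow_eq ((p : ℤ_[p]) ^ (r + t)) (V 0 0 + p ^ r * C 0 0) m
  have hentry : h 0 0 = 1 + (p : ℤ_[p]) ^ (r + t) • (V 0 0 + p ^ r * C 0 0) := by
    simp [hC, mul_add]
  rw [← hentry, hh, left_eq_add, smul_eq_zero_iff_right (pow_ne_zero _ p_ne_zero)] at hS
  simp only [smul_eq_mul] at hS
  exact ⟨-(m * C 0 0 + p ^ t * S), by linear_combination hS⟩

end TangentSpaces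

section Cases

local notation "Γ" => congruenceSubgroup p (Fin 2)

variable {H : Subgroup (SL (Fin 2) ℤ_[p])}

lemma exists_commute_Ad_of_notMem_tangent (hH : tangent H ≠ ⊥)
    {V : Matrix (Fin 2) (Fin 2) ℤ_[p]} (hVtrace : V.trace = 0) (hV : V ∉ tangent H) :
    ∃ Z : Matrix (Fin 2) (Fin 2) ℤ_[p], Z ≠ 0 ∧ Z.trace = 0 ∧ ∀ h ∈ H, Commute Z (Ad h Z) := by
  obtain ⟨X, hX, hX0⟩ := (Submodule.ne_bot_iff _).1 hH
  have htrace {Y} (hY : Y ∈ tangent H) : Y.trace = 0 := trace_eq_zero_of_mem_tangent hY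
  by_cases hab : ∀ Y ∈ tangent H, Commute X Y
  · exact ⟨X, hX0, htrace hX, fun h hh => hab _ (Ad_mem_tangent hh hX)⟩
  push Not at hab
  obtain ⟨Y, hY, hXY⟩ := hab
  have horth (W) (hW : W ∈ tangent H) : (⁅X, Y⁆ * W).trace = 0 := by
    by_contra hW0
    refine hV (mem_tangent_of_smul_mem hW0 ?_)
    rw [trace_commutator_mul_smul (htrace hX) (htrace hY) (htrace hW) hVtrace]
    exact add_mem (add_mem (Submodule.smul_mem _ _ hX) (Submodule.smul_mem _ _ hY))
      (Submodule.smul_mem _ _ hW)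
  have hZtrace : ⁅X, Y⁆.trace = 0 := by
    rw [Ring.lie_def, Matrix.trace_sub, Matrix.trace_mul_comm, sub_self]
  refine ⟨⁅X, Y⁆, sub_ne_zero.2 hXY, hZtrace, fun h hh => ?_⟩
  have horthAd (W) (hW : W ∈ tangent H) : (Ad h ⁅X, Y⁆ * W).trace = 0 := by
    have hconj : Ad h ⁅X, Y⁆ * W = Ad h (⁅X, Y⁆ * Ad h⁻¹ W) := by
      rw [map_mul, ← Ad_mul_apply, mul_inv_cancel, map_one, AlgEquiv.one_apply]
    rw [hconj, trace_Ad]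
    exact horth _ (Ad_mem_tangent (inv_mem hh) hW)
  have hlie := lie_commutator_of_trace_eq_zero (htrace hX) (htrace hY)
    ((trace_Ad h ⁅X, Y⁆).trans hZtrace)
  rw [horthAd X hX, horthAd Y hY] at hlie
  exact (commute_iff_lie_eq.2 (by simpa using hlie)).symm

lemma openIn_stabilizerUpToSign (hclosed : IsClosed (H : Set (SL (Fin 2) ℤ_[p])))
    (hinf : ¬ Finite H) {X : Matrix (Fin 2) (Fin 2) ℤ_[p]} (hX0 : X ≠ 0)
    (hX : X.trace = 0) (hHX : H ≤ stabilizerUpToSign X) : OpenIn Γ (stabilizerUpToSign X) H := by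
  refine openIn_of_tangent_le hclosed hHX fun V hV => ?_
  obtain ⟨Y, hY, hY0⟩ := (Submodule.ne_bot_iff _).1 (tangent_ne_bot_of_infinite hinf)
  obtain ⟨i, j, hij⟩ : ∃ i j, X i j ≠ 0 := by
    by_contra! hzero
    exact hX0 (Matrix.ext hzero)
  have hprop {W} (hW : W ∈ tangent (stabilizerUpToSign X)) : X i j • W = W i j • X :=
    smul_eq_smul_of_commute hX (trace_eq_zero_of_mem_tangent hW)
      (commute_of_mem_tangent_stabilizerUpToSign hW).symm i j
  have hYX := hprop (tangent_mono hHX hY)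
  have hYij : Y i j ≠ 0 := fun h0 => by
    rw [h0, zero_smul, smul_eq_zero_iff_right hij] at hYX
    exact hY0 hYX
  refine mem_tangent_of_smul_mem (mul_ne_zero hYij hij) ?_
  rw [mul_smul, hprop hV, smul_comm, ← hYX]
  exact Submodule.smul_mem _ _ (Submodule.smul_mem _ _ hY)

lemma mem_tangent_of_strictUpper {Y V : Matrix (Fin 2) (Fin 2) ℤ_[p]} (hY : Y ∈ tangent H)
    (hY0 : Y ≠ 0) (hY10 : Y 1 0 = 0) (hY00 : Y 0 0 = 0) (hV : V.trace = 0) (hV10 : V 1 0 = 0)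
    (hV00 : V 0 0 = 0) : V ∈ tangent H := by
  have hYtrace := trace_eq_zero_of_mem_tangent hY
  have hY01 : Y 0 1 ≠ 0 := fun hY01 => hY0 <| by
    rw [eq_of_trace_eq_zero hYtrace, hY01, hY10, hY00, neg_zero]
    exact (Matrix.eta_fin_two 0).symm
  refine mem_tangent_of_smul_mem hY01 ?_
  rw [smul_eq_smul_of_strictUpper hYtrace hY10 hY00 hV hV10 hV00]
  exact Submodule.smul_mem _ _ hY

lemma openIn_torsionBorel_zero (hclosed : IsClosed (H : Set (SL (Fin 2) ℤ_[p])))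
    (hHB : H ≤ torsionBorel 0) {X Y : Matrix (Fin 2) (Fin 2) ℤ_[p]} (hX : X ∈ tangent H)
    (hX00 : X 0 0 ≠ 0) (hY : Y ∈ tangent H) (hY0 : Y ≠ 0) (hY00 : Y 0 0 = 0) :
    OpenIn Γ (torsionBorel 0) H := by
  refine openIn_of_tangent_le hclosed hHB fun V hV => ?_
  have hlower {W} (hW : W ∈ tangent H) : W 1 0 = 0 :=
    apply_one_zero_of_mem_tangent_torsionBorel (tangent_mono hHB hW)
  have hstrict : X 0 0 • V - V 0 0 • X ∈ tangent H := by
    refine mem_tangent_of_strictUpper hY hY0 (hlower hY) hY00 ?_ ?_ ?_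
    · simp [Matrix.trace_sub, trace_eq_zero_of_mem_tangent hV, trace_eq_zero_of_mem_tangent hX]
    · simp [apply_one_zero_of_mem_tangent_torsionBorel hV, hlower hX]
    · simp [mul_comm]
  refine mem_tangent_of_smul_mem hX00 ?_
  rw [← sub_add_cancel (X 0 0 • V) (V 0 0 • X)]
  exact add_mem hstrict (Submodule.smul_mem _ _ hX)

lemma apply_zero_zero_eq_one_of_forall_tangent (hHB : H ≤ torsionBorel 0)
    (htangent : ∀ Y ∈ tangent H, Y 0 0 = 0) {h : SL (Fin 2) ℤ_[p]} (hh : h ∈ H) (hh2 : h ∈ Γ 2) :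
    h 0 0 = 1 := by
  by_cases hh1 : h = 1
  · simp [hh1]
  obtain ⟨A, hA⟩ := mem_congruenceSubgroup_iff.1 hh2
  obtain ⟨X, hX, hX0, hXh, -⟩ := exists_log_mem_tangent hh hh1 le_rfl hA
  have hX10 := apply_one_zero_of_mem_tangent_torsionBorel (tangent_mono hHB hX)
  have hXform := eq_of_trace_eq_zero (trace_eq_zero_of_mem_tangent hX)
  rw [htangent X hX, hX10, neg_zero] at hXform
  have hX01 : X 0 1 ≠ 0 := fun hX01 => hX0 <| by
    rw [hXform, hX01]
    exact (Matrix.eta_fin_two 0).symm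
  have hdiag : h 1 1 = h 0 0 := by
    have hentry := congrFun₂ hXh.eq 0 1
    rw [hXform] at hentry
    exact mul_left_cancel₀ hX01 (by simpa [Matrix.mul_apply, mul_comm] using hentry)
  have hdet := h.det_coe
  rw [Matrix.det_fin_two, (hHB hh).1, mul_zero, sub_zero, hdiag] at hdet
  have h00 : h 0 0 = 1 + p ^ 2 * A 0 0 := by simpa using congrFun₂ hA 0 0
  refine (mul_self_eq_one_iff.1 hdet).resolve_right fun hneg => ?_
  have hdvd : (p : ℤ_[p]) ^ 2 ∣ (2 : ℤ) := ⟨-A 0 0, by push_cast; linear_combination hneg - h00⟩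
  have hle := Int.le_of_dvd two_pos ((PadicInt.pow_p_dvd_int_iff 2 2).1 hdvd)
  have hp : (2 : ℤ) ≤ p := mod_cast (Fact.out : p.Prime).two_le
  nlinarith

lemma openIn_torsionBorel_index (hclosed : IsClosed (H : Set (SL (Fin 2) ℤ_[p])))
    (hinf : ¬ Finite H) (hHB : H ≤ torsionBorel 0) (htangent : ∀ Y ∈ tangent H, Y 0 0 = 0) :
    OpenIn Γ (torsionBorel (Γ 2).index) H := by
  have hle : H ≤ torsionBorel (Γ 2).index := fun h hh => by
    refine ⟨(hHB hh).1, ?_⟩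
    rw [← pow_apply_zero_zero_of_mem_torsionBorel (hHB hh)]
    exact apply_zero_zero_eq_one_of_forall_tangent hHB htangent (pow_mem hh _)
      (Subgroup.pow_index_mem _ _)
  refine openIn_of_tangent_le hclosed hle fun V hV => ?_
  obtain ⟨Y, hY, hY0⟩ := (Submodule.ne_bot_iff _).1 (tangent_ne_bot_of_infinite hinf)
  exact mem_tangent_of_strictUpper hY hY0
    (apply_one_zero_of_mem_tangent_torsionBorel (tangent_mono hHB hY)) (htangent Y hY)
    (trace_eq_zero_of_mem_tangent hV) (apply_one_zero_of_mem_tangent_torsionBorel hV)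
    (apply_zero_zero_of_mem_tangent_torsionBorel Subgroup.FiniteIndex.index_ne_zero hV)

end Cases

/-! ### Conjugacy of nearby tori -/

section NearbyTori

variable {p : ℕ} [Fact p.Prime] {X Y : Matrix (Fin 2) (Fin 2) ℤ_[p]}

-- With `D = det X`, the matrix `X * Y - D` intertwines `X` and `Y`, and equals `-2 * D` times an
-- approximation of the identity.
lemma exists_Ad_eq_of_det_eq (hX : X.trace = 0) (hY : Y.trace = 0) (hdet : X.det = Y.det)
    (hY0 : Y.det ≠ 0) {E : Matrix (Fin 2) (Fin 2) ℤ_[p]} (hXY : X = Y + (8 * p * Y.det) • E) :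
    ∃ g : SL (Fin 2) ℤ_[p], Ad g Y = X := by
  set D := Y.det
  obtain ⟨v, hv, g, hg⟩ := exists_one_add_smul_eq_smul_coe dvd_rfl (X * E)
  have hXX := mul_self_of_trace_eq_zero hX
  have hYY := mul_self_of_trace_eq_zero hY
  rw [hdet] at hXX
  have happrox : X * Y - D • 1 = (-2 * D) • (v • (g : Matrix (Fin 2) (Fin 2) ℤ_[p])) := by
    rw [← hg, show Y = X - (8 * p * D) • E by rw [hXY, add_sub_cancel_right], mul_sub, hXX,
      mul_smul_comm, Fintype.card_fin]
    push_cast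
    module
  have hintertwine : X * (X * Y - D • 1) = (X * Y - D • 1) * Y := by
    rw [mul_sub, ← mul_assoc, hXX, sub_mul, mul_assoc, hYY]
    simp only [smul_mul_assoc, mul_smul_comm, one_mul, mul_one]
    module
  rw [happrox, mul_smul_comm, smul_mul_assoc] at hintertwine
  exact ⟨g, Ad_eq_of_mul_eq_mul hv (smul_right_injective _ (mul_ne_zero (by simp) hY0) hintertwine)⟩

lemma exists_det_add_smul_eq (Y C : Matrix (Fin 2) (Fin 2) ℤ_[p]) :
    ∃ u : ℤ_[p], (Y + (8 * p * Y.det) ^ 2 • C).det =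
      (1 + 2 * (8 * p * Y.det) * u) ^ 2 * Y.det := by
  set q := 8 * p * Y.det with hq
  obtain ⟨w, hw⟩ : ∃ w, (Y + q ^ 2 • C).det = Y.det + q ^ 2 * w :=
    ⟨Y 0 0 * C 1 1 + C 0 0 * Y 1 1 - Y 0 1 * C 1 0 - C 0 1 * Y 1 0 + q ^ 2 * C.det, by
      simp only [Matrix.det_fin_two, Matrix.add_apply, Matrix.smul_apply, smul_eq_mul]; ring⟩
  obtain ⟨u, hu⟩ := exists_one_add_eq_pow (q := q) ⟨8 * Y.det, by rw [hq]; ring⟩ 2 (2 * p * w)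
  refine ⟨u, ?_⟩
  push_cast at hu
  rw [hw, ← hu]
  linear_combination q * w * hq

lemma exists_conj_stabilizerUpToSign_eq (hX : X.trace = 0) (hY : Y.trace = 0) (hY0 : Y.det ≠ 0)
    {C : Matrix (Fin 2) (Fin 2) ℤ_[p]} (hXY : X = Y + (8 * p * Y.det) ^ 2 • C) :
    ∃ g : SL (Fin 2) ℤ_[p], MulAut.conj g • stabilizerUpToSign X = stabilizerUpToSign Y := by
  obtain ⟨u, hu⟩ := exists_det_add_smul_eq Y C
  set q := 8 * p * Y.det with hq
  obtain ⟨s, hs⟩ : IsUnit (1 + 2 * q * u) :=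
    isUnit_one_add_of_p_dvd ⟨16 * Y.det * u, by rw [hq]; ring⟩
  have hdet : ((s : ℤ_[p]) • Y).det = (s : ℤ_[p]) ^ 2 * Y.det := by
    rw [Matrix.det_smul, Fintype.card_fin]
  rw [← hXY, ← hs, ← hdet] at hu
  have hnear : X = (s : ℤ_[p]) • Y + (8 * p * ((s : ℤ_[p]) • Y).det) •
      (((s⁻¹ : ℤ_[p]ˣ) : ℤ_[p]) ^ 2 • (q • C - (2 * u) • Y)) := by
    have hcancel : (8 * p * ((s : ℤ_[p]) • Y).det) * ((s⁻¹ : ℤ_[p]ˣ) : ℤ_[p]) ^ 2 = q := by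
      rw [hdet]
      linear_combination q * (s * ((s⁻¹ : ℤ_[p]ˣ) : ℤ_[p]) + 1) * s.mul_inv
    rw [smul_smul, hcancel, hs, hXY]
    module
  obtain ⟨g, hg⟩ := exists_Ad_eq_of_det_eq hX (by rw [Matrix.trace_smul, hY, smul_zero]) hu
    (hdet ▸ mul_ne_zero (pow_ne_zero 2 s.ne_zero) hY0) hnear
  refine equivalence_exists_conj_smul_eq.symm ⟨g, ?_⟩
  rw [← stabilizerUpToSign_smul s.ne_zero, conj_smul_stabilizerUpToSign, hg]

/-- The normalizers of the maximal tori of `SL₂`. A torus is given by a traceless matrix of nonzero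
determinant spanning its Lie algebra. -/
def torusNormalizers (p : ℕ) [Fact p.Prime] : Set (Subgroup (SL (Fin 2) ℤ_[p])) :=
  {M | ∃ X : Matrix (Fin 2) (Fin 2) ℤ_[p], X.trace = 0 ∧ X.det ≠ 0 ∧ M = stabilizerUpToSign X}

theorem countableUpToConj_torusNormalizers : CountableUpToConj (torusNormalizers p) := by
  let ι := {X : Matrix (Fin 2) (Fin 2) ℤ_[p] // X.trace = 0 ∧ X.det ≠ 0}
  have hrange : Set.range (fun X : ι => stabilizerUpToSign X.1) = torusNormalizers p := by
    ext M
    simp [torusNormalizers, ι, eq_comm, and_assoc]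
  have hlevel (X : ι) : ∃ k : ℕ, (8 * p * X.1.det) ^ 2 ∣ (p : ℤ_[p]) ^ k :=
    exists_dvd_p_pow (by simp [X.2.2, NeZero.ne p])
  choose k hk using hlevel
  rw [← hrange]
  refine countableUpToConj_range_of_code (β := Σ k, Matrix (Fin 2) (Fin 2) (ZMod (p ^ k)))
    (fun X => ⟨k X, X.1.map (PadicInt.toZModPow (k X))⟩) fun X Y hcode => ?_
  obtain ⟨hkk, hmap⟩ := Sigma.mk.inj_iff.1 hcode
  rw [hkk] at hmap
  obtain ⟨C, hC⟩ := map_toZModPow_eq_iff.1 (eq_of_heq hmap)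
  obtain ⟨d, hd⟩ := hk Y
  rw [hd, mul_smul] at hC
  exact exists_conj_stabilizerUpToSign_eq X.2.1 Y.2.1 Y.2.2 hC

end NearbyTori

/-! ### Closed subgroups of `SL₂(ℤ_p)` -/

lemma isClosed_conj_smul {G : Type*} [Group G] [TopologicalSpace G] [SeparatelyContinuousMul G]
    {H : Subgroup G} (hH : IsClosed (H : Set G)) (g : G) :
    IsClosed ((MulAut.conj g • H : Subgroup G) : Set G) := by
  rw [Subgroup.coe_pointwise_smul]
  exact ((Homeomorph.mulLeft g).trans (Homeomorph.mulRight g⁻¹)).isClosed_image.2 hH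

instance (p : ℕ) [Fact p.Prime] (N : ℕ) : IsTopologicalGroup (SL (Fin N) ℤ_[p]) :=
  Matrix.SpecialLinearGroup.topologicalGroup

section TwoByTwo

variable {p : ℕ} [Fact p.Prime] {H : Subgroup (SL (Fin 2) ℤ_[p])}

local notation "Γ" => congruenceSubgroup p (Fin 2)

/-- Representatives, up to conjugation and passing to open subgroups, of the infinite closed
subgroups of `SL₂(ℤ_p)`. -/
def modelSubgroups (p : ℕ) [Fact p.Prime] : Set (Subgroup (SL (Fin 2) ℤ_[p])) :=
  insert ⊤ (Set.range torsionBorel) ∪ torusNormalizers p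

lemma countableUpToConj_modelSubgroups : CountableUpToConj (modelSubgroups p) :=
  (countableUpToConj_of_countable ((Set.countable_range _).insert ⊤)).union
    countableUpToConj_torusNormalizers

lemma exists_openIn_of_le_stabilizerUpToSign
    (hclosed : IsClosed (H : Set (SL (Fin 2) ℤ_[p]))) (hinf : ¬ Finite H)
    {X : Matrix (Fin 2) (Fin 2) ℤ_[p]} (hX : X.trace = 0) (hdet : X.det ≠ 0)
    (hHX : H ≤ stabilizerUpToSign X) : ∃ M ∈ modelSubgroups p, OpenIn Γ M H := by
  refine ⟨stabilizerUpToSign X, Or.inr ⟨X, hX, hdet, rfl⟩,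
    openIn_stabilizerUpToSign hclosed hinf ?_ hX hHX⟩
  rintro rfl
  simp at hdet

lemma exists_openIn_of_le_torsionBorel_zero
    (hclosed : IsClosed (H : Set (SL (Fin 2) ℤ_[p]))) (hinf : ¬ Finite H)
    (hHB : H ≤ torsionBorel 0) : ∃ M ∈ modelSubgroups p, OpenIn Γ M H := by
  have hlower {W} (hW : W ∈ tangent H) : W 1 0 = 0 :=
    apply_one_zero_of_mem_tangent_torsionBorel (tangent_mono hHB hW)
  have torsionBorel_mem (m : ℕ) : torsionBorel m ∈ modelSubgroups p := Or.inl (Or.inr ⟨m, rfl⟩)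
  by_cases hunip : ∀ Y ∈ tangent H, Y 0 0 = 0
  · exact ⟨_, torsionBorel_mem _, openIn_torsionBorel_index hclosed hinf hHB hunip⟩
  push Not at hunip
  obtain ⟨X, hX, hX00⟩ := hunip
  by_cases htorus : ∀ Y ∈ tangent H, Y 0 0 = 0 → Y = 0
  · have hXtrace := trace_eq_zero_of_mem_tangent hX
    refine exists_openIn_of_le_stabilizerUpToSign hclosed hinf hXtrace ?_ fun h hh => ?_
    · rw [eq_of_trace_eq_zero hXtrace, hlower hX]
      simpa using hX00
    · refine Or.inl (sub_eq_zero.1 (htorus _ (sub_mem (Ad_mem_tangent hh hX) hX) ?_))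
      rw [Matrix.sub_apply, Ad_apply_zero_zero_of_mem_torsionBorel (hHB hh) (hlower hX), sub_self]
  · push Not at htorus
    obtain ⟨Y, hY, hY00, hY0⟩ := htorus
    exact ⟨_, torsionBorel_mem 0, openIn_torsionBorel_zero hclosed hHB hX hX00 hY hY0 hY00⟩

theorem exists_conj_openIn_of_infinite (hclosed : IsClosed (H : Set (SL (Fin 2) ℤ_[p])))
    (hinf : ¬ Finite H) :
    ∃ g : SL (Fin 2) ℤ_[p], ∃ M ∈ modelSubgroups p, OpenIn Γ M (MulAut.conj g • H) := by
  by_cases hfull : ∀ V : Matrix (Fin 2) (Fin 2) ℤ_[p], V.trace = 0 → V ∈ tangent H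
  · refine ⟨1, ⊤, Or.inl (Or.inl rfl), ?_⟩
    rw [map_one, one_smul]
    exact openIn_of_tangent_le hclosed le_top fun V hV => hfull V (trace_eq_zero_of_mem_tangent hV)
  push Not at hfull
  obtain ⟨V, hVtrace, hV⟩ := hfull
  obtain ⟨Z, hZ0, hZ, hcomm⟩ :=
    exists_commute_Ad_of_notMem_tangent (tangent_ne_bot_of_infinite hinf) hVtrace hV
  by_cases hdet : Z.det = 0
  · obtain ⟨g, b, hb, hg⟩ := exists_Ad_eq_of_trace_eq_zero_of_det_eq_zero hZ0 hZ hdet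
    refine ⟨g, exists_openIn_of_le_torsionBorel_zero (isClosed_conj_smul hclosed g) ?_
      (conj_smul_le_torsionBorel_zero hb hg hcomm)⟩
    rwa [(Subgroup.equivSMul (MulAut.conj g) H).toEquiv.finite_iff.symm]
  · refine ⟨1, ?_⟩
    rw [map_one, one_smul]
    exact exists_openIn_of_le_stabilizerUpToSign hclosed hinf hZ hdet fun h hh =>
      Ad_eq_or_eq_neg_of_commute hZ hdet (hcomm h hh)

theorem countableUpToConj_isClosed_two :
    CountableUpToConj {H : Subgroup (SL (Fin 2) ℤ_[p]) |
      IsClosed (H : Set (SL (Fin 2) ℤ_[p]))} := by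
  have hopen : CountableUpToConj {H | ∃ M ∈ modelSubgroups p, OpenIn Γ M H} :=
    countableUpToConj_modelSubgroups.openIn
  refine (countableUpToConj_finite.union hopen).of_forall_exists_conj_mem fun H hH => ?_
  by_cases hfin : Finite H
  · exact ⟨1, Or.inl (by simpa using hfin)⟩
  · exact (exists_conj_openIn_of_infinite hH hfin).imp fun _ => Or.inr

end TwoByTwo

end PadicSL

/-- Let `p` be a prime and `N ≥ 1`, and let `G = SL_N(ℤ_p)`.  Then the set of
conjugacy classes of closed subgroups of `G` (the quotient of the set of closed subgroups by
the relation identifying `H` and `K` whenever `K = gHg⁻¹` for some `g ∈ G`) is countable if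
and only if `N ≤ 2`. -/
theorem countable_conjugacyClasses_closedSubgroups_SL_iff
    (p : ℕ) [Fact p.Prime] (N : ℕ) (hN : 1 ≤ N) :
    Countable
      (Quot (fun H K :
          {H : Subgroup (Matrix.SpecialLinearGroup (Fin N) ℤ_[p]) //
            IsClosed (H.1 : Set (Matrix.SpecialLinearGroup (Fin N) ℤ_[p]))} =>
        ∃ g : Matrix.SpecialLinearGroup (Fin N) ℤ_[p],
          Subgroup.map (MulAut.conj g).toMonoidHom H.1 = K.1))
      ↔ N ≤ 2 := by
  rw [PadicSL.countable_quot_conj_iff]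
  constructor
  · contrapose!
    exact fun hN2 => PadicSL.not_countableUpToConj_isClosed (by simpa using hN2)
  · intro hN2
    obtain rfl | rfl : N = 1 ∨ N = 2 := by lia
    · exact PadicSL.countableUpToConj_of_countable (Set.to_countable _)
    · exact PadicSL.countableUpToConj_isClosed_two
end
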